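/- arXiv:2003.05577 — 2 statements merged into one kernel-verified Lean document; each statement's English description precedes it below -/
import Mathlib

section
/- Let d ≥ 0 be an even integer and let k0,k1,k2,k3 be nonzero elements of F with k0 k1 k2 k3 = q^{-d-1}. Then the representation O(k0,k1,k2,k3) of H_q is irreducible if and only if both of the following hold: (1) q^i ≠ 1 for all even i with 2 ≤ i ≤ d; (2) k0^2 ≠ q^{-i}, k1^2 ≠ q^{-i}, k2^2 ≠ q^{-i}, and k3^2 ≠ q^{-i} for all even i with 2 ≤ i ≤ d. -/
/-!
Write `d = 2m`, `aₙ = v₂ₙ`, `bₙ = v₂ₙ₊₁`. The coefficients of `T₀`, `T₁`, `T₂`, `T₃` that lead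
down the basis vanish exactly where condition (1), or condition (2) for `k₀` or `k₂`, fails.

*Necessity.* If such a coefficient vanishes, the basis vectors beyond that place span a proper
stable subspace (`OB.good_of_simple`); this gives (1) and the conditions on `k₀` and `k₂`. For the
other two parameters, the last basis vector `aₘ` is a common eigenvector of `T₂` and `T₃`, so with
respect to the rotated quadruple `T₃, T₀, T₁, T₂` it generates a quotient of the
infinite-dimensional module (`HRel.exists_mrel`). As `aₘ` generates everything
(`OB.last_generates`), a uniqueness argument (`OB.eq_zero`) shows that this quotient is again of
the form `O`, now with parameters `k₃, k₀, k₁, k₂` (`OB.rot`). The flag argument applied to the new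
basis gives the conditions on `k₃` and `k₁`.

*Sufficiency.* Under (1) and (2) the rotation can be repeated. Let `W ≠ 0` be stable; as `aₘ`
generates everything, it is enough to find `aₘ` in `W`. A suitable polynomial `R` in `T₂` and `T₃`
commutes with both and has image the line through `aₘ` (`OB.exists_rank_one`), so the functional
giving the `aₘ`-coefficient of `R w` is an eigenvector of the transposes of `T₂` and `T₃`, with
eigenvalues `k₂` and `k₃`. In the basis obtained by rotating three times, which is adapted to
`T₁, T₂, T₃, T₀`, the only such functionals are the multiples of the last coordinate
(`OB.functional_eq`), and the last coordinate does not vanish on a nonzero stable subspace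
(`OB.exists_last`). Hence some `w` in `W` has `R w` a nonzero multiple of `aₘ`.
-/

universe u

namespace DAHA

variable {F : Type*} [Field F]

/-- A representation of the universal DAHA `H_q` of type `(C₁∨, C₁)` on `V`:
a quadruple of invertible operators (indexed by `ZMod 4`) such that each
`Tᵢ + Tᵢ⁻¹` commutes with every `Tⱼ` and `T₀ T₁ T₂ T₃ = q⁻¹ • id`. -/
def IsRep {V : Type*} [AddCommGroup V] [Module F V] (q : F)
    (T : ZMod 4 → Module.End F V) : Prop :=
  (∀ i, IsUnit (T i)) ∧
  (∀ i j, Commute (T i + Ring.inverse (T i)) (T j)) ∧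
  (T 0 * T 1 * T 2 * T 3 = q⁻¹ • (1 : Module.End F V))

/-- Irreducibility: `V ≠ 0` and the only invariant subspaces are `⊥` and `⊤`. -/
def Irred {V : Type*} [AddCommGroup V] [Module F V]
    (T : ZMod 4 → Module.End F V) : Prop :=
  (∃ v : V, v ≠ 0) ∧
  ∀ W : Submodule F V, (∀ i, ∀ w ∈ W, T i w ∈ W) → W = ⊥ ∨ W = ⊤

/-- Isomorphism of two operator quadruples. -/
def Iso {V : Type*} {V' : Type*} [AddCommGroup V] [Module F V]
    [AddCommGroup V'] [Module F V']
    (T : ZMod 4 → Module.End F V) (T' : ZMod 4 → Module.End F V') : Prop :=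
  ∃ S : V ≃ₗ[F] V', ∀ i v, S (T i v) = T' i (S v)

/-- The twist of an operator quadruple by `ε ∈ ℤ/4ℤ`. -/
def twist {V : Type*} [AddCommGroup V] [Module F V]
    (T : ZMod 4 → Module.End F V) (ε : ZMod 4) : ZMod 4 → Module.End F V :=
  fun i => T (i + ε)

/-- The standard basis vectors `v_i` of `Fin (d+1) → F`, extended by `0` beyond index `d`. -/
noncomputable def e (F : Type*) [Field F] (d i : ℕ) : Fin (d + 1) → F :=
  if h : i < d + 1 then Pi.single (⟨i, h⟩ : Fin (d + 1)) (1 : F) else 0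

/-- The basis vectors `m_i` of `ℕ →₀ F`. -/
noncomputable def mv (F : Type*) [Field F] (i : ℕ) : ℕ →₀ F := Finsupp.single i 1

/-- The defining action of the even-dimensional module `E(k₀,k₁,k₂,k₃)` (for `d` odd)
on the basis `v_0, …, v_d` of `Fin (d+1) → F`. -/
def IsE (q k0 k1 k2 k3 : F) (d : ℕ)
    (T : ZMod 4 → Module.End F (Fin (d + 1) → F)) : Prop :=
  (∀ i : ℕ, Even i → 2 ≤ i → i ≤ d - 1 →
    T 0 (e F d i) = (k0⁻¹ * (q ^ i)⁻¹ * (1 - q ^ i) * (1 - k0 ^ 2 * q ^ i)) • e F d (i - 1)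
      + (k0 + k0⁻¹ - k0⁻¹ * (q ^ i)⁻¹) • e F d i) ∧
  (∀ i : ℕ, Odd i → i ≤ d - 2 →
    T 0 (e F d i) = (k0⁻¹ * (q ^ (i + 1))⁻¹) • (e F d i - e F d (i + 1))) ∧
  (T 0 (e F d 0) = k0 • e F d 0) ∧
  (T 0 (e F d d) = k0 • e F d d) ∧
  (∀ i : ℕ, Even i → 2 ≤ i → i ≤ d - 1 →
    T 1 (e F d i) = (-(k1 * (1 - q ^ i) * (1 - k0 ^ 2 * q ^ i))) • e F d (i - 1)
      + k1 • e F d i + k1⁻¹ • e F d (i + 1)) ∧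
  (∀ i : ℕ, Odd i → i ≤ d → T 1 (e F d i) = k1⁻¹ • e F d i) ∧
  (T 1 (e F d 0) = k1 • e F d 0 + k1⁻¹ • e F d 1) ∧
  (∀ i : ℕ, Even i → i ≤ d - 1 →
    T 2 (e F d i) = (k0⁻¹ * k1⁻¹ * k3⁻¹ * (q ^ (i + 1))⁻¹) • (e F d i - e F d (i + 1))) ∧
  (∀ i : ℕ, Odd i → i ≤ d →
    T 2 (e F d i) = ((k0 * k1 * k3 * q ^ i)⁻¹ * (k0 * k1 * k3 * q ^ i - k2)
        * (k0 * k1 * k3 * q ^ i - k2⁻¹)) • e F d (i - 1)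
      + (k2 + k2⁻¹ - k0⁻¹ * k1⁻¹ * k3⁻¹ * (q ^ i)⁻¹) • e F d i) ∧
  (∀ i : ℕ, Even i → i ≤ d - 1 → T 3 (e F d i) = k3 • e F d i) ∧
  (∀ i : ℕ, Odd i → i ≤ d - 2 →
    T 3 (e F d i) = (-(k3⁻¹ * (k0 * k1 * k3 * q ^ i - k2)
        * (k0 * k1 * k3 * q ^ i - k2⁻¹))) • e F d (i - 1)
      + k3⁻¹ • e F d i + k3 • e F d (i + 1)) ∧
  (T 3 (e F d d) = (-(k3⁻¹ * (k0 * k1 * k3 * q ^ d - k2)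
        * (k0 * k1 * k3 * q ^ d - k2⁻¹))) • e F d (d - 1)
      + k3⁻¹ • e F d d)

/-- The defining action of the odd-dimensional module `O(k₀,k₁,k₂,k₃)` (for `d` even)
on the basis `v_0, …, v_d` of `Fin (d+1) → F`. -/
def IsO (q k0 k1 k2 k3 : F) (d : ℕ)
    (T : ZMod 4 → Module.End F (Fin (d + 1) → F)) : Prop :=
  (∀ i : ℕ, Even i → 2 ≤ i → i ≤ d →
    T 0 (e F d i) = (k0⁻¹ * (q ^ i)⁻¹ * (1 - q ^ i) * (1 - k0 ^ 2 * q ^ i)) • e F d (i - 1)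
      + (k0 + k0⁻¹ - k0⁻¹ * (q ^ i)⁻¹) • e F d i) ∧
  (∀ i : ℕ, Odd i → i ≤ d - 1 →
    T 0 (e F d i) = (k0⁻¹ * (q ^ (i + 1))⁻¹) • (e F d i - e F d (i + 1))) ∧
  (T 0 (e F d 0) = k0 • e F d 0) ∧
  (∀ i : ℕ, Even i → 2 ≤ i → i ≤ d - 2 →
    T 1 (e F d i) = (-(k1 * (1 - q ^ i) * (1 - k0 ^ 2 * q ^ i))) • e F d (i - 1)
      + k1 • e F d i + k1⁻¹ • e F d (i + 1)) ∧
  (∀ i : ℕ, Odd i → i ≤ d - 1 → T 1 (e F d i) = k1⁻¹ • e F d i) ∧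
  (T 1 (e F d 0) = k1 • e F d 0 + k1⁻¹ • e F d 1) ∧
  (T 1 (e F d d) = (-(k1 * (1 - q ^ d) * (1 - k0 ^ 2 * q ^ d))) • e F d (d - 1) + k1 • e F d d) ∧
  (∀ i : ℕ, Even i → i ≤ d - 2 →
    T 2 (e F d i) = (k2 * q ^ (d - i)) • (e F d i - e F d (i + 1))) ∧
  (∀ i : ℕ, Odd i → i ≤ d - 1 →
    T 2 (e F d i) = (-(k2 * (1 - (k2 ^ 2)⁻¹ * (q ^ (d + 1 - i))⁻¹) * (1 - q ^ (d - i + 1)))) • e F d (i - 1)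
      + (k2 + k2⁻¹ - k2 * q ^ (d - i + 1)) • e F d i) ∧
  (T 2 (e F d d) = k2 • e F d d) ∧
  (∀ i : ℕ, Even i → i ≤ d → T 3 (e F d i) = k3 • e F d i) ∧
  (∀ i : ℕ, Odd i → i ≤ d - 1 →
    T 3 (e F d i) = (-(k3⁻¹ * (1 - (k2 ^ 2)⁻¹ * (q ^ (d + 1 - i))⁻¹)
        * (1 - (q ^ (d + 1 - i))⁻¹))) • e F d (i - 1)
      + k3⁻¹ • e F d i + k3 • e F d (i + 1))

/-- The defining action of the infinite-dimensional module `M(k₀,k₁,k₂,k₃)`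
on the basis `m_0, m_1, …` of `ℕ →₀ F`. -/
def IsM (q k0 k1 k2 k3 : F) (T : ZMod 4 → Module.End F (ℕ →₀ F)) : Prop :=
  (∀ i : ℕ, Even i → 2 ≤ i →
    T 0 (mv F i) = (k0⁻¹ * (q ^ i)⁻¹ * (1 - q ^ i) * (1 - k0 ^ 2 * q ^ i)) • mv F (i - 1)
      + (k0 + k0⁻¹ - k0⁻¹ * (q ^ i)⁻¹) • mv F i) ∧
  (∀ i : ℕ, Odd i →
    T 0 (mv F i) = (k0⁻¹ * (q ^ (i + 1))⁻¹) • (mv F i - mv F (i + 1))) ∧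
  (T 0 (mv F 0) = k0 • mv F 0) ∧
  (∀ i : ℕ, Even i → 2 ≤ i →
    T 1 (mv F i) = (-(k1 * (1 - q ^ i) * (1 - k0 ^ 2 * q ^ i))) • mv F (i - 1)
      + k1 • mv F i + k1⁻¹ • mv F (i + 1)) ∧
  (∀ i : ℕ, Odd i → T 1 (mv F i) = k1⁻¹ • mv F i) ∧
  (T 1 (mv F 0) = k1 • mv F 0 + k1⁻¹ • mv F 1) ∧
  (∀ i : ℕ, Even i →
    T 2 (mv F i) = (k0⁻¹ * k1⁻¹ * k3⁻¹ * (q ^ (i + 1))⁻¹) • (mv F i - mv F (i + 1))) ∧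
  (∀ i : ℕ, Odd i →
    T 2 (mv F i) = ((k0 * k1 * k3 * q ^ i)⁻¹ * (k0 * k1 * k3 * q ^ i - k2)
        * (k0 * k1 * k3 * q ^ i - k2⁻¹)) • mv F (i - 1)
      + (k2 + k2⁻¹ - k0⁻¹ * k1⁻¹ * k3⁻¹ * (q ^ i)⁻¹) • mv F i) ∧
  (∀ i : ℕ, Even i → T 3 (mv F i) = k3 • mv F i) ∧
  (∀ i : ℕ, Odd i →
    T 3 (mv F i) = (-(k3⁻¹ * (k0 * k1 * k3 * q ^ i - k2)
        * (k0 * k1 * k3 * q ^ i - k2⁻¹))) • mv F (i - 1)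
      + k3⁻¹ • mv F i + k3 • mv F (i + 1))

/-! ### Relations, bases and stable subspaces -/

section Helpers

variable {V : Type*} [AddCommGroup V] [Module F V]

/-- The relations of `H_q` in the form in which they hold on `O(k₀,k₁,k₂,k₃)`:
`Tᵢ² = (kᵢ + kᵢ⁻¹) Tᵢ - 1` for each `i`, and `T₀ T₁ T₂ T₃ = q⁻¹`. -/
structure HRel (q k0 k1 k2 k3 : F) (T0 T1 T2 T3 : Module.End F V) : Prop where
  quad0 : ∀ v, T0 (T0 v) = (k0 + k0⁻¹) • T0 v - v
  quad1 : ∀ v, T1 (T1 v) = (k1 + k1⁻¹) • T1 v - v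
  quad2 : ∀ v, T2 (T2 v) = (k2 + k2⁻¹) • T2 v - v
  quad3 : ∀ v, T3 (T3 v) = (k3 + k3⁻¹) • T3 v - v
  prod : ∀ v, T0 (T1 (T2 (T3 v))) = q⁻¹ • v

/-- The relations are stable under cyclic rotation of the four operators. -/
theorem HRel.rot {q k0 k1 k2 k3 : F} {T0 T1 T2 T3 : Module.End F V}
    (h : HRel q k0 k1 k2 k3 T0 T1 T2 T3) : HRel q k3 k0 k1 k2 T3 T0 T1 T2 where
  quad0 := h.quad3
  quad1 := h.quad0
  quad2 := h.quad1
  quad3 := h.quad2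
  prod v := by
    -- `v = T₃ u` with `u = (k₃ + k₃⁻¹ - T₃) v`, by the quadratic relation for `T₃`.
    obtain ⟨u, rfl⟩ : ∃ u, T3 u = v :=
      ⟨(k3 + k3⁻¹) • v - T3 v, by rw [map_sub, map_smul, h.quad3]; abel⟩
    rw [h.prod, map_smul]

/-- The action formulas of `O(k₀,k₁,k₂,k₃)` with `d = 2m`, written with `aₙ = v₂ₙ`,
`bₙ = v₂ₙ₊₁` and imposed for all `n`, with no vanishing beyond `d` required: these are the
formulas of the infinite-dimensional module of which `O(k₀,k₁,k₂,k₃)` is a quotient. Only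
`q²` enters, and `q ^ (d - 2n)` is written `(q²)ᵐ / (q²)ⁿ` so that it makes sense for all `n`. -/
structure MRel (q k0 k1 k2 k3 : F) (m : ℕ) (T0 T1 T2 T3 : Module.End F V)
    (a b : ℕ → V) : Prop where
  T0a0 : T0 (a 0) = k0 • a 0
  T0as : ∀ n, T0 (a (n + 1)) =
    (k0⁻¹ * ((q ^ 2) ^ (n + 1))⁻¹ * (1 - (q ^ 2) ^ (n + 1)) * (1 - k0 ^ 2 * (q ^ 2) ^ (n + 1))) • b n
      + (k0 + k0⁻¹ - k0⁻¹ * ((q ^ 2) ^ (n + 1))⁻¹) • a (n + 1)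
  T0b : ∀ n, T0 (b n) = (k0⁻¹ * ((q ^ 2) ^ (n + 1))⁻¹) • (b n - a (n + 1))
  T1a0 : T1 (a 0) = k1 • a 0 + k1⁻¹ • b 0
  T1as : ∀ n, T1 (a (n + 1)) =
    (-(k1 * (1 - (q ^ 2) ^ (n + 1)) * (1 - k0 ^ 2 * (q ^ 2) ^ (n + 1)))) • b n
      + k1 • a (n + 1) + k1⁻¹ • b (n + 1)
  T1b : ∀ n, T1 (b n) = k1⁻¹ • b n
  T2a : ∀ n, T2 (a n) = (k2 * ((q ^ 2) ^ m * ((q ^ 2) ^ n)⁻¹)) • (a n - b n)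
  T2b : ∀ n, T2 (b n) =
    (-(k2 * (1 - (k2 ^ 2)⁻¹ * ((q ^ 2) ^ n * ((q ^ 2) ^ m)⁻¹))
        * (1 - (q ^ 2) ^ m * ((q ^ 2) ^ n)⁻¹))) • a n
      + (k2 + k2⁻¹ - k2 * ((q ^ 2) ^ m * ((q ^ 2) ^ n)⁻¹)) • b n
  T3a : ∀ n, T3 (a n) = k3 • a n
  T3b : ∀ n, T3 (b n) =
    (-(k3⁻¹ * (1 - (k2 ^ 2)⁻¹ * ((q ^ 2) ^ n * ((q ^ 2) ^ m)⁻¹))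
        * (1 - (q ^ 2) ^ n * ((q ^ 2) ^ m)⁻¹))) • a n
      + k3⁻¹ • b n + k3 • a (n + 1)

/-- `(aₙ)`, `(bₙ)` exhibit the operators `T₀, T₁, T₂, T₃` on `V` as the module
`O(k₀,k₁,k₂,k₃)` with `d = 2m`: the action formulas hold, and `a₀, b₀, a₁, …, bₘ₋₁, aₘ` is a
basis of `V`. Being a basis is encoded as spanning together with `dim V = 2m + 1`. -/
structure OB (q k0 k1 k2 k3 : F) (m : ℕ) (T0 T1 T2 T3 : Module.End F V)
    (a b : ℕ → V) : Prop extends MRel q k0 k1 k2 k3 m T0 T1 T2 T3 a b where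
  a_zero : ∀ n, m < n → a n = 0
  b_zero : ∀ n, m ≤ n → b n = 0
  span : ∀ W : Submodule F V, (∀ n, a n ∈ W) → (∀ n, b n ∈ W) → W = ⊤
  finrank : Module.finrank F V = 2 * m + 1

/-- `W` is stable under the four operators. -/
def Inv (T0 T1 T2 T3 : Module.End F V) (W : Submodule F V) : Prop :=
  (∀ w ∈ W, T0 w ∈ W) ∧ (∀ w ∈ W, T1 w ∈ W) ∧ (∀ w ∈ W, T2 w ∈ W) ∧ (∀ w ∈ W, T3 w ∈ W)

theorem Inv.rot {T0 T1 T2 T3 : Module.End F V} {W : Submodule F V}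
    (h : Inv T0 T1 T2 T3 W) : Inv T3 T0 T1 T2 W :=
  ⟨h.2.2.2, h.1, h.2.1, h.2.2.1⟩

/-- The only stable subspaces are `⊥` and `⊤`. -/
def Simple (T0 T1 T2 T3 : Module.End F V) : Prop :=
  ∀ W : Submodule F V, Inv T0 T1 T2 T3 W → W = ⊥ ∨ W = ⊤

/-- `k² qⁱ ≠ 1` for all even `2 ≤ i ≤ 2m`. For `k = 1` this is condition (1). -/
def Good (q : F) (m : ℕ) (k : F) : Prop :=
  ∀ n, 1 ≤ n → n ≤ m → k ^ 2 * (q ^ 2) ^ n ≠ 1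

/-- Linear maps that agree on all `aₙ` and `bₙ` are equal. -/
theorem OB.ext_lin {q k0 k1 k2 k3 : F} {m : ℕ} {T0 T1 T2 T3 : Module.End F V} {a b : ℕ → V}
    (h : OB q k0 k1 k2 k3 m T0 T1 T2 T3 a b) {U : Type*} [AddCommGroup U] [Module F U]
    (f g : V →ₗ[F] U) (ha : ∀ n, f (a n) = g (a n)) (hb : ∀ n, f (b n) = g (b n)) (v : V) :
    f v = g v := by
  have := h.span (LinearMap.eqLocus f g) ha hb
  have hv : v ∈ LinearMap.eqLocus f g := this ▸ Submodule.mem_top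
  exact hv

/-! ### The relations of `H_q` on `O(k₀,k₁,k₂,k₃)` -/

theorem OB.hrel {q k0 k1 k2 k3 : F} (hq : q ≠ 0) (hk0 : k0 ≠ 0) (hk1 : k1 ≠ 0)
    (hk2 : k2 ≠ 0) (hk3 : k3 ≠ 0) {m : ℕ}
    (hpar : k0 * k1 * k2 * k3 * (q * (q ^ 2) ^ m) = 1)
    {T0 T1 T2 T3 : Module.End F V} {a b : ℕ → V}
    (h : OB q k0 k1 k2 k3 m T0 T1 T2 T3 a b) : HRel q k0 k1 k2 k3 T0 T1 T2 T3 := by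
  have hp : ∀ n, (q ^ 2) ^ n ≠ 0 := fun n => pow_ne_zero _ (pow_ne_zero _ hq)
  have hP := hp m
  have e3 : k3 = (q * (q ^ 2) ^ m * k0 * k1 * k2)⁻¹ := by
    exact eq_inv_of_mul_eq_one_left (by linear_combination hpar)
  refine ⟨?_, ?_, ?_, ?_, ?_⟩
  · refine h.ext_lin (T0 * T0) ((k0 + k0⁻¹) • T0 - 1) ?_ ?_
    · rintro (_ | n)
      · simp only [Module.End.mul_apply, LinearMap.sub_apply, LinearMap.smul_apply,
          Module.End.one_apply, h.T0a0, map_smul]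
        match_scalars; field_simp; ring
      · have := hp (n + 1)
        simp only [Module.End.mul_apply, LinearMap.sub_apply, LinearMap.smul_apply,
          Module.End.one_apply, h.T0as, h.T0b, map_smul, map_add]
        generalize (q ^ 2) ^ (n + 1) = x at *
        match_scalars <;> field_simp <;> ring
    · intro n
      have := hp (n + 1)
      simp only [Module.End.mul_apply, LinearMap.sub_apply, LinearMap.smul_apply,
          Module.End.one_apply, h.T0as, h.T0b, map_smul, map_add, map_sub]
      generalize (q ^ 2) ^ (n + 1) = x at *
      match_scalars <;> field_simp <;> ring
  · refine h.ext_lin (T1 * T1) ((k1 + k1⁻¹) • T1 - 1) ?_ ?_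
    · rintro (_ | n)
      · simp only [Module.End.mul_apply, LinearMap.sub_apply, LinearMap.smul_apply,
          Module.End.one_apply, h.T1a0, h.T1b, map_smul, map_add]
        match_scalars <;> field_simp <;> ring
      · simp only [Module.End.mul_apply, LinearMap.sub_apply, LinearMap.smul_apply,
          Module.End.one_apply, h.T1as, h.T1b, map_smul, map_add]
        generalize (q ^ 2) ^ (n + 1) = x at *
        match_scalars <;> field_simp <;> ring
    · intro n
      simp only [Module.End.mul_apply, LinearMap.sub_apply, LinearMap.smul_apply,
          Module.End.one_apply, h.T1b, map_smul]
      match_scalars; field_simp; ring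
  · refine h.ext_lin (T2 * T2) ((k2 + k2⁻¹) • T2 - 1) ?_ ?_ <;>
    · intro n
      have := hp n
      simp only [Module.End.mul_apply, LinearMap.sub_apply, LinearMap.smul_apply,
          Module.End.one_apply, h.T2a, h.T2b, map_smul, map_add, map_sub]
      generalize (q ^ 2) ^ n = x at *
      generalize (q ^ 2) ^ m = P at *
      match_scalars <;> field_simp <;> ring
  · refine h.ext_lin (T3 * T3) ((k3 + k3⁻¹) • T3 - 1) ?_ ?_ <;>
    · intro n
      simp only [Module.End.mul_apply, LinearMap.sub_apply, LinearMap.smul_apply,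
          Module.End.one_apply, h.T3a, h.T3b, map_smul, map_add, map_sub]
      match_scalars <;> field_simp <;> ring
  · refine h.ext_lin (T0 * T1 * T2 * T3) (q⁻¹ • 1) ?_ ?_
    · rintro (_ | n)
      · simp only [Module.End.mul_apply, LinearMap.smul_apply, pow_zero,
          Module.End.one_apply, h.T3a, h.T2a, h.T1a0, h.T1b, h.T0a0, h.T0b,
          map_smul, map_add, map_sub]
        generalize (q ^ 2) ^ m = P at *
        subst e3
        match_scalars <;> field_simp <;> ring
      · have := hp (n + 1)
        simp only [Module.End.mul_apply, LinearMap.smul_apply,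
          Module.End.one_apply, h.T3a, h.T2a, h.T1as, h.T1b, h.T0as, h.T0b,
          map_smul, map_add, map_sub]
        generalize (q ^ 2) ^ m = P at *
        generalize (q ^ 2) ^ (n + 1) = x at *
        subst e3
        match_scalars <;> field_simp <;> ring
    · rintro (_ | n)
      · simp only [Module.End.mul_apply, LinearMap.smul_apply,
          Module.End.one_apply, h.T3a, h.T3b, h.T2a, h.T2b, h.T1as, h.T1a0, h.T1b, h.T0as,
          h.T0a0, h.T0b, map_smul, map_add, map_sub, zero_add, pow_one, pow_zero]
        generalize (q ^ 2) ^ m = P at *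
        subst e3
        match_scalars <;> field_simp <;> ring
      · have := hp n
        simp only [Module.End.mul_apply, LinearMap.smul_apply,
          Module.End.one_apply, h.T3a, h.T3b, h.T2a, h.T2b, h.T1as, h.T1b, h.T0as,
          h.T0b, map_smul, map_add, map_sub, pow_succ (q ^ 2) n, pow_succ (q ^ 2) (n + 1)]
        generalize (q ^ 2) ^ m = P at *
        generalize (q ^ 2) ^ n = x at *
        subst e3
        match_scalars <;> field_simp <;> ring

/-- If `T v` satisfies the equation of an eigenvector for a root `c` of the quadratic relation, so
does `v`, as `T` is invertible. -/
theorem eig {T : Module.End F V} {k c : F} (hc : (k + k⁻¹ - c) * c = 1) {v : V}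
    (hT : ∀ v, T (T v) = (k + k⁻¹) • T v - v) (h : T (T v) = c • T v) : T v = c • v := by
  have e : v = (k + k⁻¹ - c) • T v := by
    rw [sub_smul, ← h, hT]; abel
  conv_rhs => rw [e, smul_smul, mul_comm, hc, one_smul]

/-! ### The module generated by a common eigenvector of `T₀` and `T₃` -/

/-- From `aₙ` to `aₙ₊₁`. Here `x = (q²)ⁿ`, `P = (q²)ᵐ`, and `u` stands for
`(1 - x)(1 - k₀² x) bₙ₋₁`, which is `0` for `n = 0`. Each of the two eigenvector conclusions
comes from applying a factor of a quadratic relation to an instance of the product relation. -/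
theorem HRel.step {q k0 k1 k2 k3 : F} (hq : q ≠ 0) (hk0 : k0 ≠ 0) (hk1 : k1 ≠ 0)
    (hk2 : k2 ≠ 0) (hk3 : k3 ≠ 0) {T0 T1 T2 T3 : Module.End F V}
    (h : HRel q k0 k1 k2 k3 T0 T1 T2 T3) {P x : F} (hP : P ≠ 0) (hx : x ≠ 0)
    (hpar : k0 * k1 * k2 * k3 * (q * P) = 1) {a u b a' : V}
    (h3 : T3 a = k3 • a) (h1 : T1 u = k1⁻¹ • u)
    (h0 : T0 a = (k0⁻¹ * x⁻¹) • u + (k0 + k0⁻¹ - k0⁻¹ * x⁻¹) • a)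
    (hb : b = a - (k2 * (P * x⁻¹))⁻¹ • T2 a) (ha' : a' = b - (k0 * (x * q ^ 2)) • T0 b) :
    T1 a = -k1 • u + k1 • a + k1⁻¹ • b ∧ T1 b = k1⁻¹ • b ∧ T3 a' = k3 • a' ∧
      T3 b = (-(k3⁻¹ * (1 - (k2 ^ 2)⁻¹ * (x * P⁻¹)) * (1 - x * P⁻¹))) • a
        + k3⁻¹ • b + k3 • a' := by
  have e3 : k3 = (q * P * k0 * k1 * k2)⁻¹ := by
    exact eq_inv_of_mul_eq_one_left (by linear_combination hpar)
  have T2a : T2 a = (k2 * (P * x⁻¹)) • (a - b) := by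
    rw [hb]; match_scalars <;> field_simp <;> ring
  have T2b : T2 b = (-(k2 * (1 - (k2 ^ 2)⁻¹ * (x * P⁻¹)) * (1 - P * x⁻¹))) • a
      + (k2 + k2⁻¹ - k2 * (P * x⁻¹)) • b := by
    rw [hb, map_sub, map_smul, h.quad2, T2a, hb, T2a]
    match_scalars <;> field_simp <;> ring
  have T0b : T0 b = (k0⁻¹ * (x * q ^ 2)⁻¹) • (b - a') := by
    rw [ha']; match_scalars <;> field_simp <;> ring
  have inv : ∀ {T : Module.End F V} {k : F} {v w : V},
      (∀ v, T (T v) = (k + k⁻¹) • T v - v) → T v = w → v = (k + k⁻¹) • w - T w := by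
    rintro T k v _ hT rfl; rw [hT]; abel
  -- `T₁ (a - b) = k₁ (a - u)`, from `T₁ T₂ a = k₃⁻¹ q⁻¹ T₀⁻¹ a`.
  have r1 : T1 b = T1 a - k1 • a + k1 • u := by
    have e : T1 (T2 a) = (k3⁻¹ * q⁻¹) • ((k0 + k0⁻¹) • a - T0 a) := by
      have := h.prod ((k3⁻¹) • a)
      rw [map_smul, h3, smul_smul, inv_mul_cancel₀ hk3, one_smul] at this
      have := inv h.quad0 this
      rw [this]; simp only [map_smul]
      match_scalars <;> field_simp
    rw [hb, map_sub, map_smul, e, h0]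
    subst e3
    match_scalars <;> field_simp <;> ring
  have hT1b : T1 b = k1⁻¹ • b := by
    refine eig (k := k1) (by field_simp; ring) h.quad1 ?_
    conv_lhs => rw [r1]
    rw [map_add, map_sub, map_smul, map_smul, h.quad1, h1, r1]
    match_scalars <;> field_simp <;> ring
  have hT1a : T1 a = -k1 • u + k1 • a + k1⁻¹ • b := by
    rw [← hT1b, r1]; match_scalars <;> ring
  -- The analogous relation for `a'`, from `T₃ T₀ b = k₁ q⁻¹ T₂⁻¹ b`.
  have r3 : T3 a' = T3 b - (k3⁻¹ • b
      + (-(k3⁻¹ * (1 - (k2 ^ 2)⁻¹ * (x * P⁻¹)) * (1 - x * P⁻¹))) • a) := by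
    have e : T3 (T0 b) = (k1 * q⁻¹) • ((k2 + k2⁻¹) • b - T2 b) := by
      have := h.rot.rot.prod (k1 • b)
      rw [map_smul, hT1b, smul_smul, mul_inv_cancel₀ hk1, one_smul] at this
      have := inv h.quad2 this
      rw [this]; simp only [map_smul]
      match_scalars <;> field_simp
    rw [ha', map_sub, map_smul, e, T2b]
    subst e3
    match_scalars <;> field_simp <;> ring
  have hT3a' : T3 a' = k3 • a' := by
    refine eig (k := k3) (by field_simp; ring) h.quad3 ?_
    conv_lhs => rw [r3]
    rw [map_sub, map_add, map_smul, map_smul, h.quad3, h3, r3]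
    match_scalars <;> field_simp <;> ring
  refine ⟨hT1a, hT1b, hT3a', ?_⟩
  rw [← hT3a', r3]; abel

/-- A common eigenvector of `T₀` and `T₃` generates a quotient of the infinite-dimensional
module. -/
theorem HRel.exists_mrel {q k0 k1 k2 k3 : F} (hq : q ≠ 0) (hk0 : k0 ≠ 0) (hk1 : k1 ≠ 0)
    (hk2 : k2 ≠ 0) (hk3 : k3 ≠ 0) {m : ℕ}
    (hpar : k0 * k1 * k2 * k3 * (q * (q ^ 2) ^ m) = 1) {T0 T1 T2 T3 : Module.End F V}
    (h : HRel q k0 k1 k2 k3 T0 T1 T2 T3) {v : V} (h0 : T0 v = k0 • v) (h3 : T3 v = k3 • v) :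
    ∃ a b : ℕ → V, a 0 = v ∧ MRel q k0 k1 k2 k3 m T0 T1 T2 T3 a b := by
  have hp : ∀ n, (q ^ 2) ^ n ≠ 0 := fun n => pow_ne_zero _ (pow_ne_zero _ hq)
  -- `bₙ` and `aₙ₊₁` are read off from the formulas for `T₂ aₙ` and `T₀ bₙ`.
  let β : ℕ → V → V := fun n w => w - (k2 * ((q ^ 2) ^ m * ((q ^ 2) ^ n)⁻¹))⁻¹ • T2 w
  let a : ℕ → V := fun n => Nat.rec v
    (fun n w => β n w - (k0 * ((q ^ 2) ^ n * q ^ 2)) • T0 (β n w)) n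
  let b : ℕ → V := fun n => β n (a n)
  let u : ℕ → V := fun n => Nat.casesOn n 0
    (fun n => ((1 - (q ^ 2) ^ (n + 1)) * (1 - k0 ^ 2 * (q ^ 2) ^ (n + 1))) • b n)
  have hb : ∀ n, b n = a n - (k2 * ((q ^ 2) ^ m * ((q ^ 2) ^ n)⁻¹))⁻¹ • T2 (a n) := fun n => rfl
  have ha : ∀ n, a (n + 1) = b n - (k0 * ((q ^ 2) ^ n * q ^ 2)) • T0 (b n) := fun n => rfl
  have T2a : ∀ n, T2 (a n) = (k2 * ((q ^ 2) ^ m * ((q ^ 2) ^ n)⁻¹)) • (a n - b n) := by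
    intro n
    have := hp n; have := hp m
    rw [hb, sub_sub_cancel, smul_smul, mul_inv_cancel₀ (by simp [*]), one_smul]
  have T0b : ∀ n, T0 (b n) = (k0⁻¹ * ((q ^ 2) ^ (n + 1))⁻¹) • (b n - a (n + 1)) := by
    intro n
    have := hp n
    rw [ha, sub_sub_cancel, smul_smul, pow_succ (q ^ 2) n, ← mul_inv,
      inv_mul_cancel₀ (by simp [*]), one_smul]
  have T2b : ∀ n, T2 (b n) =
      (-(k2 * (1 - (k2 ^ 2)⁻¹ * ((q ^ 2) ^ n * ((q ^ 2) ^ m)⁻¹))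
        * (1 - (q ^ 2) ^ m * ((q ^ 2) ^ n)⁻¹))) • a n
      + (k2 + k2⁻¹ - k2 * ((q ^ 2) ^ m * ((q ^ 2) ^ n)⁻¹)) • b n := by
    intro n
    have := hp n; have := hp m
    rw [hb, map_sub, map_smul, h.quad2, T2a, hb, T2a]
    match_scalars <;> field_simp <;> ring
  have T0as : ∀ n, T0 (a (n + 1)) =
      (k0⁻¹ * ((q ^ 2) ^ (n + 1))⁻¹) • u (n + 1)
      + (k0 + k0⁻¹ - k0⁻¹ * ((q ^ 2) ^ (n + 1))⁻¹) • a (n + 1) := by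
    intro n
    have := hp n
    simp only [u]
    rw [ha, map_sub, map_smul, h.quad0, T0b, ha, T0b, pow_succ (q ^ 2) n]
    match_scalars <;> field_simp <;> ring
  have I : ∀ n, T3 (a n) = k3 • a n ∧ T1 (u n) = k1⁻¹ • u n ∧
      T0 (a n) = (k0⁻¹ * ((q ^ 2) ^ n)⁻¹) • u n
        + (k0 + k0⁻¹ - k0⁻¹ * ((q ^ 2) ^ n)⁻¹) • a n := by
    intro n
    induction n with
    | zero => exact ⟨h3, by simp [u], by simp [u, a, h0]⟩
    | succ n ih =>
      obtain ⟨_, s2, s3, _⟩ := h.step hq hk0 hk1 hk2 hk3 (hp m) (hp n) hpar ih.1 ih.2.1 ih.2.2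
        (hb n) (ha n)
      exact ⟨s3, by simp only [u, map_smul, s2]; rw [smul_comm], T0as n⟩
  have S : ∀ n, _ := fun n => h.step hq hk0 hk1 hk2 hk3 (hp m) (hp n) hpar (I n).1 (I n).2.1
    (I n).2.2 (hb n) (ha n)
  refine ⟨a, b, rfl, h0, fun n => ?_, T0b, ?_, fun n => ?_, fun n => (S n).2.1, T2a, T2b,
    fun n => (I n).1, fun n => (S n).2.2.2⟩
  · rw [T0as]; simp only [u, smul_smul]; congr 2; ring
  · rw [(S 0).1]; simp [u]
  · rw [(S (n + 1)).1]; simp only [u, smul_smul]; congr 3; ring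

/-! ### Coordinates -/

/-- Coordinates with respect to the basis: `f j w` and `g j w` are the coefficients of `aⱼ` and
`bⱼ` in `w`. -/
structure Coord (m : ℕ) (a b : ℕ → V) (f g : ℕ → V →ₗ[F] F) : Prop where
  fa : ∀ j ≤ m, ∀ i, f j (a i) = if i = j then 1 else 0
  fb : ∀ j ≤ m, ∀ i, f j (b i) = 0
  gb : ∀ j < m, ∀ i, g j (b i) = if i = j then 1 else 0
  ga : ∀ j < m, ∀ i, g j (a i) = 0
  inj : ∀ w, (∀ j ≤ m, f j w = 0) → (∀ j < m, g j w = 0) → w = 0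

section Module

variable {q k0 k1 k2 k3 : F} {m : ℕ} {T0 T1 T2 T3 : Module.End F V} {a b : ℕ → V}

theorem OB.exists_coord (h : OB q k0 k1 k2 k3 m T0 T1 T2 T3 a b) :
    ∃ f g : ℕ → V →ₗ[F] F, Coord m a b f g := by
  let u : Fin (m + 1) ⊕ Fin m → V := Sum.elim (fun i => a i) (fun i => b i)
  have hspan : ⊤ ≤ Submodule.span F (Set.range u) := by
    rw [h.span (Submodule.span F (Set.range u))]
    · intro n
      by_cases hn : n ≤ m
      · exact Submodule.subset_span ⟨Sum.inl ⟨n, by omega⟩, rfl⟩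
      · rw [h.a_zero n (by omega)]; exact Submodule.zero_mem _
    · intro n
      by_cases hn : n < m
      · exact Submodule.subset_span ⟨Sum.inr ⟨n, hn⟩, rfl⟩
      · rw [h.b_zero n (by omega)]; exact Submodule.zero_mem _
  let B := basisOfTopLeSpanOfCardEqFinrank u hspan (by rw [h.finrank]; simp; omega)
  have hBa : ∀ i (hi : i ≤ m), a i = B (Sum.inl ⟨i, by omega⟩) := by
    intro i hi; simp [B, u]
  have hBb : ∀ i (hi : i < m), b i = B (Sum.inr ⟨i, hi⟩) := by
    intro i hi; simp [B, u]
  refine ⟨fun j => if hj : j ≤ m then B.coord (Sum.inl ⟨j, by omega⟩) else 0,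
    fun j => if hj : j < m then B.coord (Sum.inr ⟨j, hj⟩) else 0, ?_, ?_, ?_, ?_, ?_⟩
  · intro j hj i
    by_cases hi : i ≤ m
    · simp [hj, hBa i hi, Finsupp.single_apply]
    · simp [h.a_zero i (by omega), show i ≠ j by omega]
  · intro j hj i
    by_cases hi : i < m
    · simp [hj, hBb i hi]
    · simp [h.b_zero i (by omega)]
  · intro j hj i
    by_cases hi : i < m
    · simp [hj, hBb i hi, Finsupp.single_apply]
    · simp [h.b_zero i (by omega), show i ≠ j by omega]
  · intro j hj i
    by_cases hi : i ≤ m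
    · simp [hj, hBa i hi]
    · simp [h.a_zero i (by omega)]
  · intro w hf hg
    refine B.ext_elem ?_
    rintro (⟨j, hj⟩ | ⟨j, hj⟩)
    · have := hf j (by omega)
      simpa [show j ≤ m by omega] using this
    · have := hg j hj
      simpa [hj] using this

variable {f g : ℕ → V →ₗ[F] F}

theorem OB.f_zero_T0 (h : OB q k0 k1 k2 k3 m T0 T1 T2 T3 a b) (c : Coord m a b f g) (w : V) :
    f 0 (T0 w) = k0 * f 0 w := by
  refine h.ext_lin (f 0 ∘ₗ T0) (k0 • f 0) ?_ ?_ w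
  · rintro (_ | n)
    · simp [h.T0a0]
    · simp [h.T0as, c.fa, c.fb]
  · intro n; simp [h.T0b, c.fa, c.fb]

theorem OB.f_succ_T0 (h : OB q k0 k1 k2 k3 m T0 T1 T2 T3 a b) (c : Coord m a b f g) {j : ℕ}
    (hj : j < m) (w : V) :
    f (j + 1) (T0 w) = -(k0⁻¹ * ((q ^ 2) ^ (j + 1))⁻¹) * g j w
      + (k0 + k0⁻¹ - k0⁻¹ * ((q ^ 2) ^ (j + 1))⁻¹) * f (j + 1) w := by
  have := c.fa (j + 1) (by omega)
  have := c.fb (j + 1) (by omega)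
  have := c.ga j hj
  have := c.gb j hj
  refine h.ext_lin (f (j + 1) ∘ₗ T0) (-(k0⁻¹ * ((q ^ 2) ^ (j + 1))⁻¹) • g j
      + (k0 + k0⁻¹ - k0⁻¹ * ((q ^ 2) ^ (j + 1))⁻¹) • f (j + 1)) ?_ ?_ w
  · rintro (_ | n)
    · simp [h.T0a0, *]
    · by_cases hn : n = j <;> simp [h.T0as, *]
  · intro n
    by_cases hn : n = j <;> simp [h.T0b, *]

theorem OB.g_T1 (h : OB q k0 k1 k2 k3 m T0 T1 T2 T3 a b) (c : Coord m a b f g) {j : ℕ}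
    (hj : j < m) (w : V) :
    g j (T1 w) = -(k1 * (1 - (q ^ 2) ^ (j + 1)) * (1 - k0 ^ 2 * (q ^ 2) ^ (j + 1))) * f (j + 1) w
      + k1⁻¹ * f j w + k1⁻¹ * g j w := by
  have := c.fa (j + 1) (by omega)
  have := c.fb (j + 1) (by omega)
  have := c.fa j (by omega)
  have := c.fb j (by omega)
  have := c.ga j hj
  have := c.gb j hj
  refine h.ext_lin (g j ∘ₗ T1)
    (-(k1 * (1 - (q ^ 2) ^ (j + 1)) * (1 - k0 ^ 2 * (q ^ 2) ^ (j + 1))) • f (j + 1)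
      + k1⁻¹ • f j + k1⁻¹ • g j) ?_ ?_ w
  · rintro (_ | n)
    · simp [h.T1a0, *]
    · simp only [LinearMap.comp_apply, h.T1as, map_add, map_smul, LinearMap.add_apply,
        LinearMap.smul_apply, smul_eq_mul, *]
      by_cases hn : n = j
      · simp [hn]
      · by_cases hn' : n + 1 = j <;> simp [hn, hn']
  · intro n
    by_cases hn : n = j <;> simp [h.T1b, *]

/-- A nonzero stable subspace is not contained in the hyperplane spanned by the basis vectors
other than `aₘ`: raising with `T₀` and `T₁` has invertible coefficients. -/
theorem OB.exists_last (h : OB q k0 k1 k2 k3 m T0 T1 T2 T3 a b) (c : Coord m a b f g)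
    (hq : q ≠ 0) (hk0 : k0 ≠ 0) (hk1 : k1 ≠ 0) {W : Submodule F V}
    (hW : Inv T0 T1 T2 T3 W) (hne : W ≠ ⊥) : ∃ w ∈ W, f m w ≠ 0 := by
  by_contra! hm
  have hp : ∀ n, (q ^ 2) ^ n ≠ 0 := fun n => pow_ne_zero _ (pow_ne_zero _ hq)
  have hg : ∀ j < m, (∀ w ∈ W, f (j + 1) w = 0) → ∀ w ∈ W, g j w = 0 := by
    intro j hj hf w hw
    have e := h.f_succ_T0 c hj w
    rw [hf _ (hW.1 w hw), hf w hw] at e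
    simpa [hk0, hq] using e
  have key : ∀ n j, j + n = m → ∀ w ∈ W, f j w = 0 := by
    intro n
    induction n with
    | zero => rintro j rfl; exact hm
    | succ n ih =>
      intro j hj w hw
      have hf := ih (j + 1) (by omega)
      have e := h.g_T1 c (show j < m by omega) w
      rw [hg j (by omega) hf _ (hW.2.1 w hw), hg j (by omega) hf w hw, hf w hw] at e
      simpa [hk1] using e
  refine hne ((Submodule.eq_bot_iff _).2 fun w hw => c.inj w ?_ ?_)
  · exact fun j hj => key (m - j) j (by omega) w hw
  · exact fun j hj => hg j hj (key (m - (j + 1)) (j + 1) (by omega)) w hw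

/-- The coefficient of `aₘ` spans the functionals that are eigenvectors of the transposes of
`T₁` and `T₂` with eigenvalues `k₁` and `k₂`. -/
theorem OB.functional_eq (h : OB q k0 k1 k2 k3 m T0 T1 T2 T3 a b) (c : Coord m a b f g)
    (hq : q ≠ 0) (hk1 : k1 ≠ 0) (hk2 : k2 ≠ 0) (g1 : Good q m 1) (ψ : V →ₗ[F] F)
    (h1 : ∀ v, ψ (T1 v) = k1 * ψ v) (h2 : ∀ v, ψ (T2 v) = k2 * ψ v) (w : V) :
    ψ w = ψ (a m) * f m w := by
  have hp : ∀ n, (q ^ 2) ^ n ≠ 0 := fun n => pow_ne_zero _ (pow_ne_zero _ hq)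
  have hb : ∀ n, ψ (b n) = 0 := by
    intro n
    induction n with
    | zero =>
      have e := h1 (a 0)
      rw [h.T1a0] at e
      simpa [hk1] using e
    | succ n ih =>
      have e := h1 (a (n + 1))
      rw [h.T1as] at e
      simpa [hk1, ih] using e
  have ha : ∀ n, n < m → ψ (a n) = 0 := by
    intro n hn
    have e := h2 (a n)
    rw [h.T2a, map_smul, map_sub, hb, sub_zero, smul_eq_mul, mul_assoc] at e
    have e := mul_left_cancel₀ hk2 e
    have hne := g1 (m - n) (by omega) (by omega)
    have hm : (q ^ 2) ^ m = (q ^ 2) ^ (m - n) * (q ^ 2) ^ n := by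
      rw [← pow_add]; congr 1; omega
    rw [hm, mul_inv_cancel_right₀ (hp n)] at e
    rw [one_pow, one_mul] at hne
    have : ((q ^ 2) ^ (m - n) - 1) * ψ (a n) = 0 := by linear_combination e
    exact (mul_eq_zero.1 this).resolve_left (sub_ne_zero.2 hne)
  refine h.ext_lin ψ (ψ (a m) • f m) (fun n => ?_) (fun n => ?_) w
  · rcases lt_trichotomy n m with hn | rfl | hn
    · simp [ha n hn, c.fa, hn.ne]
    · simp [c.fa]
    · simp [h.a_zero n hn]
  · simp [hb, c.fb]

/-! ### Lowering and raising along the basis -/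

/-- When no coefficient of `T₀` or `T₃` leading down the basis vanishes, `aₘ` generates. -/
theorem OB.last_generates (h : OB q k0 k1 k2 k3 m T0 T1 T2 T3 a b) (hq : q ≠ 0) (hk0 : k0 ≠ 0)
    (hk3 : k3 ≠ 0) (g1 : Good q m 1) (g0 : Good q m k0) (g2 : Good q m k2)
    {W : Submodule F V} (hW : Inv T0 T1 T2 T3 W) (hm : a m ∈ W) : W = ⊤ := by
  have hp : ∀ n, (q ^ 2) ^ n ≠ 0 := fun n => pow_ne_zero _ (pow_ne_zero _ hq)
  have cancel : ∀ {x : F} {v : V}, x ≠ 0 → x • v ∈ W → v ∈ W := fun hx hv =>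
    (Submodule.smul_mem_iff W hx).1 hv
  have hb : ∀ n, n < m → a (n + 1) ∈ W → b n ∈ W := by
    intro n hn ha
    have e := hW.1 _ ha
    rw [h.T0as] at e
    refine cancel ?_ ((Submodule.add_mem_iff_left W (W.smul_mem _ ha)).1 e)
    have h1 := g1 (n + 1) (by omega) (by omega)
    have h2 := g0 (n + 1) (by omega) (by omega)
    rw [one_pow, one_mul] at h1
    have := hp (n + 1)
    simp [hk0, sub_eq_zero, h1.symm, h2.symm, hq]
  have key : ∀ j n, n + j = m → a n ∈ W := by
    intro j
    induction j with
    | zero => rintro n rfl; exact hm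
    | succ j ih =>
      intro n hn
      have ha := ih (n + 1) (by omega)
      have hbn := hb n (by omega) ha
      have e := hW.2.2.2 _ hbn
      rw [h.T3b, add_assoc, Submodule.add_mem_iff_left W
        (W.add_mem (W.smul_mem _ hbn) (W.smul_mem _ ha))] at e
      refine cancel ?_ e
      have h1 := g1 (j + 1) (by omega) (by omega)
      have h2 := g2 (j + 1) (by omega) (by omega)
      rw [one_pow, one_mul] at h1
      have hm : (q ^ 2) ^ m = (q ^ 2) ^ (j + 1) * (q ^ 2) ^ n := by
        rw [← pow_add]; congr 1; omega
      have hpn := hp n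
      have e1 : (q ^ 2) ^ n * ((q ^ 2) ^ m)⁻¹ = ((q ^ 2) ^ (j + 1))⁻¹ := by
        rw [hm, mul_inv_rev, mul_inv_cancel_left₀ hpn]
      rw [e1, ← mul_inv]
      refine neg_ne_zero.2 (mul_ne_zero (mul_ne_zero (inv_ne_zero hk3) ?_) ?_)
      · rwa [sub_ne_zero, ne_comm, Ne, inv_eq_one]
      · rwa [sub_ne_zero, ne_comm, Ne, inv_eq_one]
  refine h.span W (fun n => ?_) (fun n => ?_)
  · by_cases hn : n ≤ m
    · exact key (m - n) n (by omega)
    · rw [h.a_zero n (by omega)]; exact W.zero_mem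
  · by_cases hn : n < m
    · exact hb n hn (key (m - (n + 1)) (n + 1) (by omega))
    · rw [h.b_zero n (by omega)]; exact W.zero_mem

/-- There is an operator `R`, a polynomial in `T₂` and `T₃`, that commutes with `T₂` and `T₃`,
has image spanned by `aₘ`, and does not kill `a₀`. It is the product of the `A - αₙ` for `n < m`,
where `A = T₂ T₃ + T₃ T₂ - (k₃ + k₃⁻¹) T₂ - (k₂ + k₂⁻¹) T₃` commutes with `T₂` and `T₃` and acts
on the span of the `aₙ` by a bidiagonal matrix with diagonal entries `αₙ`. -/
theorem OB.exists_rank_one (h : OB q k0 k1 k2 k3 m T0 T1 T2 T3 a b) (hq : q ≠ 0)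
    (hk2 : k2 ≠ 0) (hk3 : k3 ≠ 0) (hr : HRel q k0 k1 k2 k3 T0 T1 T2 T3) :
    ∃ R : Module.End F V, (∀ v, R (T2 v) = T2 (R v)) ∧ (∀ v, R (T3 v) = T3 (R v)) ∧
      (∀ W : Submodule F V, Inv T0 T1 T2 T3 W → ∀ w ∈ W, R w ∈ W) ∧
      (∀ v, R v ∈ Submodule.span F {a m}) ∧ R (a 0) ≠ 0 := by
  have hp : ∀ n, (q ^ 2) ^ n ≠ 0 := fun n => pow_ne_zero _ (pow_ne_zero _ hq)
  obtain ⟨f, g, c⟩ := h.exists_coord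
  let A : Module.End F V := T2 * T3 + T3 * T2 - (k3 + k3⁻¹) • T2 - (k2 + k2⁻¹) • T3
  have hA : ∀ v, A v = T2 (T3 v) + T3 (T2 v) - (k3 + k3⁻¹) • T2 v - (k2 + k2⁻¹) • T3 v :=
    fun v => rfl
  have A2 : ∀ v, A (T2 v) = T2 (A v) := by
    intro v
    simp only [hA, map_add, map_sub, map_smul, hr.quad2]
    module
  have A3 : ∀ v, A (T3 v) = T3 (A v) := by
    intro v
    simp only [hA, map_add, map_sub, map_smul, hr.quad3]
    module
  have AW : ∀ W : Submodule F V, Inv T0 T1 T2 T3 W → ∀ w ∈ W, A w ∈ W := fun W hW w hw =>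
    W.sub_mem (W.sub_mem (W.add_mem (hW.2.2.1 _ (hW.2.2.2 _ hw)) (hW.2.2.2 _ (hW.2.2.1 _ hw)))
      (W.smul_mem _ (hW.2.2.1 _ hw))) (W.smul_mem _ (hW.2.2.2 _ hw))
  obtain ⟨α, hα⟩ : ∃ α : ℕ → F, ∀ n, A (a n) =
      α n • a n - (k2 * k3 * ((q ^ 2) ^ m * ((q ^ 2) ^ n)⁻¹)) • a (n + 1) := by
    refine ⟨fun n => k2 * k3 * ((q ^ 2) ^ m * ((q ^ 2) ^ n)⁻¹)
      + k2 * ((q ^ 2) ^ m * ((q ^ 2) ^ n)⁻¹) *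
        (k3⁻¹ * (1 - (k2 ^ 2)⁻¹ * ((q ^ 2) ^ n * ((q ^ 2) ^ m)⁻¹))
        * (1 - (q ^ 2) ^ n * ((q ^ 2) ^ m)⁻¹))
      - k3⁻¹ * k2 * ((q ^ 2) ^ m * ((q ^ 2) ^ n)⁻¹) - (k2 + k2⁻¹) * k3, fun n => ?_⟩
    simp only [hA, h.T3a, h.T2a, h.T3b, map_smul, map_sub]
    module
  -- `R n` is the product of the `A - αⱼ` for `j < n`.
  let R : ℕ → Module.End F V := fun n => Nat.rec 1 (fun n r => (A - α n • 1) * r) n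
  have hR : ∀ n v, R (n + 1) v = A (R n v) - α n • R n v := fun n v => rfl
  have R0 : ∀ v, R 0 v = v := fun v => rfl
  have R2 : ∀ n v, R n (T2 v) = T2 (R n v) := by
    intro n
    induction n with
    | zero => intro v; rfl
    | succ n ih => intro v; rw [hR, hR, ih, A2, map_sub, map_smul]
  have R3 : ∀ n v, R n (T3 v) = T3 (R n v) := by
    intro n
    induction n with
    | zero => intro v; rfl
    | succ n ih => intro v; rw [hR, hR, ih, A3, map_sub, map_smul]
  have RW : ∀ n, ∀ W : Submodule F V, Inv T0 T1 T2 T3 W → ∀ w ∈ W, R n w ∈ W := by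
    intro n
    induction n with
    | zero => intro W _ w hw; exact hw
    | succ n ih =>
      intro W hW w hw
      rw [hR]
      exact W.sub_mem (AW W hW _ (ih W hW w hw)) (W.smul_mem _ (ih W hW w hw))
  have Ra : ∀ n i, R n (a i) ∈ Submodule.span F (a '' Set.Ici n) := by
    intro n
    induction n with
    | zero => intro i; exact Submodule.subset_span ⟨i, by simp, rfl⟩
    | succ n ih =>
      intro i
      have : Submodule.span F (a '' Set.Ici n) ≤
          (Submodule.span F (a '' Set.Ici (n + 1))).comap (A - α n • 1) := by
        rw [Submodule.span_le]
        rintro _ ⟨l, hl, rfl⟩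
        have hl : n ≤ l := hl
        have e : (A - α n • 1) (a l) = (α l - α n) • a l
            - (k2 * k3 * ((q ^ 2) ^ m * ((q ^ 2) ^ l)⁻¹)) • a (l + 1) := by
          simp only [LinearMap.sub_apply, LinearMap.smul_apply, Module.End.one_apply, hα]
          module
        rw [SetLike.mem_coe, Submodule.mem_comap, e]
        refine Submodule.sub_mem _ ?_ (Submodule.smul_mem _ _
          (Submodule.subset_span ⟨l + 1, by simp; omega, rfl⟩))
        rcases hl.eq_or_lt with rfl | hl
        · simp
        · exact Submodule.smul_mem _ _ (Submodule.subset_span ⟨l, hl, rfl⟩)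
      exact this (ih i)
  have hspan : Submodule.span F (a '' Set.Ici m) ≤ Submodule.span F {a m} := by
    rw [Submodule.span_le]
    rintro _ ⟨l, hl, rfl⟩
    rcases (show m ≤ l from hl).eq_or_lt with rfl | hl
    · exact Submodule.subset_span rfl
    · rw [h.a_zero l hl]; exact Submodule.zero_mem _
  have Rc : ∀ n, ∃ x : F, x ≠ 0 ∧ R n (a 0) = x • a n := by
    intro n
    induction n with
    | zero => exact ⟨1, one_ne_zero, by rw [R0, one_smul]⟩
    | succ n ih =>
      obtain ⟨x, hx, e⟩ := ih
      refine ⟨-(x * (k2 * k3 * ((q ^ 2) ^ m * ((q ^ 2) ^ n)⁻¹))), ?_, ?_⟩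
      · simp [hx, hk2, hk3, hq]
      · rw [hR, e, map_smul, hα]; module
  have T2m : T2 (a m) = k2 • a m := by
    rw [h.T2a, h.b_zero m le_rfl, mul_inv_cancel₀ (hp m), mul_one, sub_zero]
  refine ⟨R m, R2 m, R3 m, RW m, fun v => ?_, ?_⟩
  · have : (Submodule.span F {a m}).comap (R m) = ⊤ := by
      refine h.span _ (fun n => hspan (Ra m n)) (fun n => ?_)
      -- `bₙ` is a combination of `aₙ` and `T₂ aₙ`.
      have e : b n = a n - (k2 * ((q ^ 2) ^ m * ((q ^ 2) ^ n)⁻¹))⁻¹ • T2 (a n) := by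
        rw [h.T2a, smul_smul, inv_mul_cancel₀ (by simp [hk2, hq]), one_smul, sub_sub_cancel]
      obtain ⟨x, hx⟩ := Submodule.mem_span_singleton.1 (hspan (Ra m n))
      rw [Submodule.mem_comap, e, map_sub, map_smul, R2, ← hx, map_smul, T2m]
      refine Submodule.mem_span_singleton.2 ⟨x - (k2 * ((q ^ 2) ^ m * ((q ^ 2) ^ n)⁻¹))⁻¹ * x * k2,
        ?_⟩
      module
    have hv : v ∈ (Submodule.span F {a m}).comap (R m) := this ▸ Submodule.mem_top
    exact hv
  · obtain ⟨x, hx, e⟩ := Rc m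
    rw [e]
    intro h0
    have := congrArg (f m) h0
    simp [c.fa, hx] at this

/-! ### Flags -/

/-- The span of the `aᵢ` with `j ≤ i` and the `bᵢ` with `l ≤ i`. -/
def flag (a b : ℕ → V) (j l : ℕ) : Submodule F V :=
  Submodule.span F (a '' Set.Ici j ∪ b '' Set.Ici l)

theorem a_mem_flag {j l i : ℕ} (hi : j ≤ i) : a i ∈ flag (F := F) a b j l :=
  Submodule.subset_span (Or.inl ⟨i, hi, rfl⟩)

theorem b_mem_flag {j l i : ℕ} (hi : l ≤ i) : b i ∈ flag (F := F) a b j l :=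
  Submodule.subset_span (Or.inr ⟨i, hi, rfl⟩)

theorem flag_map {U : Type*} [AddCommGroup U] [Module F U] {j l : ℕ} (T : V →ₗ[F] U)
    (W : Submodule F U) (ha : ∀ i, j ≤ i → T (a i) ∈ W) (hb : ∀ i, l ≤ i → T (b i) ∈ W) {v : V}
    (hv : v ∈ flag (F := F) a b j l) : T v ∈ W := by
  have : flag (F := F) a b j l ≤ W.comap T := by
    refine Submodule.span_le.2 ?_
    rintro _ (⟨i, hi, rfl⟩ | ⟨i, hi, rfl⟩)
    · exact ha i hi
    · exact hb i hi
  exact this hv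

theorem flag_proper (c : Coord m a b f g) {j l : ℕ} (hj : 1 ≤ j) {v : V}
    (hv : v ∈ flag (F := F) a b j l) : f 0 v = 0 := by
  have := flag_map (f 0) ⊥ (j := j) (l := l) (a := a) (b := b) ?_ ?_ hv
  · simpa using this
  · intro i hi; simp [c.fa, show i ≠ 0 by omega]
  · intro i _; simp [c.fb]

/-- A vanishing coefficient on the way down the basis makes a proper flag stable. -/
theorem OB.good_of_simple (h : OB q k0 k1 k2 k3 m T0 T1 T2 T3 a b) (hq : q ≠ 0)
    (hs : Simple T0 T1 T2 T3) : Good q m 1 ∧ Good q m k0 ∧ Good q m k2 := by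
  have hp : ∀ n, (q ^ 2) ^ n ≠ 0 := fun n => pow_ne_zero _ (pow_ne_zero _ hq)
  obtain ⟨f, g, c⟩ := h.exists_coord
  have notTop : ∀ {j l : ℕ}, 1 ≤ j → flag (F := F) a b j l ≠ ⊤ := by
    intro j l hj ht
    have := flag_proper c hj (l := l) (v := a 0) (ht ▸ Submodule.mem_top)
    simp [c.fa] at this
  have even : ∀ n, n < m →
      (1 - (q ^ 2) ^ (n + 1)) * (1 - k0 ^ 2 * (q ^ 2) ^ (n + 1)) ≠ 0 := by
    intro n hn h0
    have hI : Inv T0 T1 T2 T3 (flag a b (n + 1) (n + 1)) := by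
      refine ⟨fun w => flag_map _ _ ?_ ?_, fun w => flag_map _ _ ?_ ?_,
        fun w => flag_map _ _ ?_ ?_, fun w => flag_map _ _ ?_ ?_⟩
      · rintro (_ | i) hi
        · omega
        rw [h.T0as]
        refine add_mem ?_ (Submodule.smul_mem _ _ (a_mem_flag hi))
        rcases (show n ≤ i by omega).eq_or_lt with rfl | hi'
        · rw [mul_assoc, h0]; simp
        · exact Submodule.smul_mem _ _ (b_mem_flag hi')
      · intro i hi
        rw [h.T0b]
        exact Submodule.smul_mem _ _ (sub_mem (b_mem_flag hi) (a_mem_flag (by omega)))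
      · rintro (_ | i) hi
        · omega
        rw [h.T1as]
        refine add_mem (add_mem ?_ (Submodule.smul_mem _ _ (a_mem_flag hi)))
          (Submodule.smul_mem _ _ (b_mem_flag hi))
        rcases (show n ≤ i by omega).eq_or_lt with rfl | hi'
        · rw [mul_assoc, h0]; simp
        · exact Submodule.smul_mem _ _ (b_mem_flag hi')
      · intro i hi
        rw [h.T1b]
        exact Submodule.smul_mem _ _ (b_mem_flag hi)
      · intro i hi
        rw [h.T2a]
        exact Submodule.smul_mem _ _ (sub_mem (a_mem_flag hi) (b_mem_flag hi))
      · intro i hi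
        rw [h.T2b]
        exact add_mem (Submodule.smul_mem _ _ (a_mem_flag hi))
          (Submodule.smul_mem _ _ (b_mem_flag hi))
      · intro i hi
        rw [h.T3a]
        exact Submodule.smul_mem _ _ (a_mem_flag hi)
      · intro i hi
        rw [h.T3b]
        exact add_mem (add_mem (Submodule.smul_mem _ _ (a_mem_flag hi))
          (Submodule.smul_mem _ _ (b_mem_flag hi))) (Submodule.smul_mem _ _ (a_mem_flag (by omega)))
    rcases hs _ hI with e | e
    · have : a (n + 1) ∈ flag (F := F) a b (n + 1) (n + 1) := a_mem_flag le_rfl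
      rw [e, Submodule.mem_bot] at this
      have := congrArg (f (n + 1)) this
      simp [c.fa (n + 1) (by omega)] at this
    · exact notTop (by omega) e
  have odd : ∀ n, n < m → 1 - (k2 ^ 2)⁻¹ * ((q ^ 2) ^ n * ((q ^ 2) ^ m)⁻¹) ≠ 0 := by
    intro n hn h0
    have hI : Inv T0 T1 T2 T3 (flag a b (n + 1) n) := by
      refine ⟨fun w => flag_map _ _ ?_ ?_, fun w => flag_map _ _ ?_ ?_,
        fun w => flag_map _ _ ?_ ?_, fun w => flag_map _ _ ?_ ?_⟩
      · rintro (_ | i) hi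
        · omega
        rw [h.T0as]
        exact add_mem (Submodule.smul_mem _ _ (b_mem_flag (by omega)))
          (Submodule.smul_mem _ _ (a_mem_flag hi))
      · intro i hi
        rw [h.T0b]
        exact Submodule.smul_mem _ _ (sub_mem (b_mem_flag hi) (a_mem_flag (by omega)))
      · rintro (_ | i) hi
        · omega
        rw [h.T1as]
        exact add_mem (add_mem (Submodule.smul_mem _ _ (b_mem_flag (by omega)))
          (Submodule.smul_mem _ _ (a_mem_flag hi)))
          (Submodule.smul_mem _ _ (b_mem_flag (by omega)))
      · intro i hi
        rw [h.T1b]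
        exact Submodule.smul_mem _ _ (b_mem_flag hi)
      · intro i hi
        rw [h.T2a]
        exact Submodule.smul_mem _ _ (sub_mem (a_mem_flag hi) (b_mem_flag (by omega)))
      · intro i hi
        rw [h.T2b]
        refine add_mem ?_ (Submodule.smul_mem _ _ (b_mem_flag hi))
        rcases hi.eq_or_lt with rfl | hi'
        · rw [h0]; simp
        · exact Submodule.smul_mem _ _ (a_mem_flag hi')
      · intro i hi
        rw [h.T3a]
        exact Submodule.smul_mem _ _ (a_mem_flag hi)
      · intro i hi
        rw [h.T3b]
        refine add_mem (add_mem ?_ (Submodule.smul_mem _ _ (b_mem_flag hi)))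
          (Submodule.smul_mem _ _ (a_mem_flag (by omega)))
        rcases hi.eq_or_lt with rfl | hi'
        · rw [h0]; simp
        · exact Submodule.smul_mem _ _ (a_mem_flag hi')
    rcases hs _ hI with e | e
    · have : b n ∈ flag (F := F) a b (n + 1) n := b_mem_flag le_rfl
      rw [e, Submodule.mem_bot] at this
      have := congrArg (g n) this
      simp [c.gb n hn] at this
    · exact notTop (by omega) e
  refine ⟨?_, ?_, ?_⟩
  · rintro (_ | n) h1 hn e
    · omega
    · rw [one_pow, one_mul] at e
      exact even n (by omega) (by rw [e]; ring)
  · rintro (_ | n) h1 hn e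
    · omega
    · exact even n (by omega) (by rw [e]; ring)
  · intro n h1 hn e
    refine odd (m - n) (by omega) ?_
    have hm : (q ^ 2) ^ m = (q ^ 2) ^ n * (q ^ 2) ^ (m - n) := by
      rw [← pow_add]; congr 1; omega
    rw [hm, mul_inv_rev, mul_inv_cancel_left₀ (hp _), ← mul_inv, e]
    simp

/-! ### Rotation -/

theorem flag_mono {j l j' l' : ℕ} (hj : j ≤ j') (hl : l ≤ l') :
    flag (F := F) a b j' l' ≤ flag (F := F) a b j l := fun _ hv =>
  flag_map (LinearMap.id : V →ₗ[F] V) _ (fun _ hi => a_mem_flag (hj.trans hi))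
    (fun _ hi => b_mem_flag (hl.trans hi)) hv

/-- A vector `w` with `T₀ w = k₀⁻¹ w`, `T₁ w = k₁⁻¹ w` whose coefficient of `a₀` vanishes is
zero. -/
theorem OB.eq_zero (h : OB q k0 k1 k2 k3 m T0 T1 T2 T3 a b) (c : Coord m a b f g) (hq : q ≠ 0)
    (hk0 : k0 ≠ 0) (hk1 : k1 ≠ 0) (g1 : Good q m 1) (g0 : Good q m k0) {w : V}
    (h0 : T0 w = k0⁻¹ • w) (h1 : T1 w = k1⁻¹ • w) (hf : f 0 w = 0) : w = 0 := by
  have hp : ∀ n, (q ^ 2) ^ n ≠ 0 := fun n => pow_ne_zero _ (pow_ne_zero _ hq)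
  have key : ∀ n ≤ m, f n w = 0 := by
    intro n
    induction n with
    | zero => exact fun _ => hf
    | succ n ih =>
      intro hn
      have e := h.g_T1 c (show n < m by omega) w
      rw [h1, map_smul, smul_eq_mul, ih (by omega), mul_zero, add_zero, right_eq_add] at e
      have h1 := g1 (n + 1) (by omega) hn
      have h2 := g0 (n + 1) (by omega) hn
      rw [one_pow, one_mul] at h1
      refine (mul_eq_zero.1 e).resolve_left (neg_ne_zero.2 (mul_ne_zero (mul_ne_zero hk1 ?_) ?_))
      · rwa [sub_ne_zero, ne_comm]
      · rwa [sub_ne_zero, ne_comm]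
  refine c.inj w key fun n hn => ?_
  have e := h.f_succ_T0 c hn w
  rw [h0, map_smul, key (n + 1) (by omega)] at e
  simpa [hk0, hq] using e

/-- The module generated by `aₘ` under the rotated operators `T₃, T₀, T₁, T₂` is all of `V`, and
it is again of the same form with parameters `k₃, k₀, k₁, k₂`. -/
theorem OB.rot (h : OB q k0 k1 k2 k3 m T0 T1 T2 T3 a b) (hq : q ≠ 0) (hk0 : k0 ≠ 0)
    (hk1 : k1 ≠ 0) (hk2 : k2 ≠ 0) (hk3 : k3 ≠ 0)
    (hpar : k0 * k1 * k2 * k3 * (q * (q ^ 2) ^ m) = 1)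
    (g1 : Good q m 1) (g0 : Good q m k0) (g2 : Good q m k2) :
    ∃ a' b' : ℕ → V, OB q k3 k0 k1 k2 m T3 T0 T1 T2 a' b' := by
  have hp : ∀ n, (q ^ 2) ^ n ≠ 0 := fun n => pow_ne_zero _ (pow_ne_zero _ hq)
  obtain ⟨f, g, c⟩ := h.exists_coord
  have hr := h.hrel hq hk0 hk1 hk2 hk3 hpar
  have T2m : T2 (a m) = k2 • a m := by
    rw [h.T2a, h.b_zero m le_rfl, mul_inv_cancel₀ (hp m), mul_one, sub_zero]
  obtain ⟨A, B, hA0, M⟩ := hr.rot.exists_mrel (m := m) hq hk3 hk0 hk1 hk2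
    (by linear_combination hpar) (h.T3a m) T2m
  have B_eq : ∀ n, B n = A n - (k1 * ((q ^ 2) ^ m * ((q ^ 2) ^ n)⁻¹))⁻¹ • T1 (A n) := by
    intro n
    rw [M.T2a, smul_smul, inv_mul_cancel₀ (by simp [hk1, hq]), one_smul, sub_sub_cancel]
  have A_eq : ∀ n, A (n + 1) = B n - (k3 * (q ^ 2) ^ (n + 1)) • T3 (B n) := by
    intro n
    rw [M.T0b, smul_smul, ← mul_inv, mul_inv_cancel₀ (by simp [hk3, hq]), one_smul, sub_sub_cancel]
  have T1flag : ∀ {l : ℕ} {v : V}, v ∈ flag (F := F) a b (l + 1) (l + 1) →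
      T1 v ∈ flag (F := F) a b (l + 1) l := by
    intro l v
    refine flag_map T1 _ ?_ ?_
    · rintro (_ | i) hi
      · omega
      rw [h.T1as]
      exact add_mem (add_mem (Submodule.smul_mem _ _ (b_mem_flag (by omega)))
        (Submodule.smul_mem _ _ (a_mem_flag hi))) (Submodule.smul_mem _ _ (b_mem_flag (by omega)))
    · intro i hi
      rw [h.T1b]
      exact Submodule.smul_mem _ _ (b_mem_flag (by omega))
  have T3flag : ∀ {l : ℕ} {v : V}, v ∈ flag (F := F) a b (l + 1) l →
      T3 v ∈ flag (F := F) a b l l := by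
    intro l v
    refine flag_map T3 _ ?_ ?_
    · intro i hi
      rw [h.T3a]
      exact Submodule.smul_mem _ _ (a_mem_flag (by omega))
    · intro i hi
      rw [h.T3b]
      exact add_mem (add_mem (Submodule.smul_mem _ _ (a_mem_flag hi))
        (Submodule.smul_mem _ _ (b_mem_flag hi))) (Submodule.smul_mem _ _ (a_mem_flag (by omega)))
  have hBflag : ∀ {n l : ℕ}, A n ∈ flag (F := F) a b (l + 1) (l + 1) →
      B n ∈ flag (F := F) a b (l + 1) l := by
    intro n l hA
    rw [B_eq]
    exact sub_mem (flag_mono le_rfl (Nat.le_succ l) hA) (Submodule.smul_mem _ _ (T1flag hA))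
  -- `Aₙ` lies in the span of the last `2n + 1` basis vectors.
  have hAflag : ∀ n j, n + j = m → A n ∈ flag (F := F) a b j j := by
    intro n
    induction n with
    | zero => intro j hj; rw [hA0]; exact a_mem_flag (by omega)
    | succ n ih =>
      intro j hj
      have hB := hBflag (ih (j + 1) (by omega))
      rw [A_eq]
      exact sub_mem (flag_mono (Nat.le_succ j) le_rfl hB) (Submodule.smul_mem _ _ (T3flag hB))
  have hf : f 0 (B m) = 0 := by
    rcases m with _ | l
    · have e := congrArg (f 0) M.T1a0
      rw [h.f_zero_T0 c] at e
      simpa [hk0] using e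
    · have e := congrArg (f 0) (M.T1as l)
      have hB := hBflag (hAflag l 1 (by omega))
      rw [h.f_zero_T0 c] at e
      simpa [hk0, flag_proper c le_rfl hB] using e
  have hBm : B m = 0 := by
    refine h.eq_zero c hq hk0 hk1 g1 g0 (M.T1b m) ?_ hf
    rw [M.T2b, mul_inv_cancel₀ (hp m)]
    simp
  have hB : ∀ n, B (m + n) = 0 ∧ A (m + n + 1) = 0 := by
    intro n
    induction n with
    | zero =>
      refine ⟨hBm, ?_⟩
      rw [A_eq]; simp [hBm]
    | succ n ih =>
      have hB' : B (m + (n + 1)) = 0 := by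
        rw [B_eq, ← add_assoc, ih.2]
        simp
      refine ⟨hB', ?_⟩
      rw [A_eq, hB']
      simp
  refine ⟨A, B, { toMRel := M, a_zero := ?_, b_zero := ?_, span := ?_, finrank := h.finrank }⟩
  · intro n hn
    obtain ⟨j, rfl⟩ := Nat.exists_eq_add_of_lt hn
    exact (hB j).2
  · intro n hn
    obtain ⟨j, rfl⟩ := Nat.exists_eq_add_of_le hn
    exact (hB j).1
  · intro W hA hB
    have hI : Inv T3 T0 T1 T2 (flag (F := F) A B 0 0) := by
      have mA : ∀ i, A i ∈ flag (F := F) A B 0 0 := fun i => a_mem_flag i.zero_le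
      have mB : ∀ i, B i ∈ flag (F := F) A B 0 0 := fun i => b_mem_flag i.zero_le
      refine ⟨fun w => flag_map _ _ ?_ ?_, fun w => flag_map _ _ ?_ ?_,
        fun w => flag_map _ _ ?_ ?_, fun w => flag_map _ _ ?_ ?_⟩
      · rintro (_ | i) -
        · rw [M.T0a0]
          exact Submodule.smul_mem _ _ (mA _)
        · rw [M.T0as]
          exact add_mem (Submodule.smul_mem _ _ (mB _)) (Submodule.smul_mem _ _ (mA _))
      · intro i _
        rw [M.T0b]
        exact Submodule.smul_mem _ _ (sub_mem (mB _) (mA _))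
      · rintro (_ | i) -
        · rw [M.T1a0]
          exact add_mem (Submodule.smul_mem _ _ (mA _)) (Submodule.smul_mem _ _ (mB _))
        · rw [M.T1as]
          exact add_mem (add_mem (Submodule.smul_mem _ _ (mB _)) (Submodule.smul_mem _ _ (mA _)))
            (Submodule.smul_mem _ _ (mB _))
      · intro i _
        rw [M.T1b]
        exact Submodule.smul_mem _ _ (mB _)
      · intro i _
        rw [M.T2a]
        exact Submodule.smul_mem _ _ (sub_mem (mA _) (mB _))
      · intro i _
        rw [M.T2b]
        exact add_mem (Submodule.smul_mem _ _ (mA _)) (Submodule.smul_mem _ _ (mB _))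
      · intro i _
        rw [M.T3a]
        exact Submodule.smul_mem _ _ (mA _)
      · intro i _
        rw [M.T3b]
        exact add_mem (add_mem (Submodule.smul_mem _ _ (mA _)) (Submodule.smul_mem _ _ (mB _)))
          (Submodule.smul_mem _ _ (mA _))
    have htop := h.last_generates hq hk0 hk3 g1 g0 g2 hI.rot.rot.rot
      (hA0 ▸ a_mem_flag (Nat.zero_le 0))
    rw [eq_top_iff, ← htop]
    exact fun v hv => flag_map LinearMap.id W (fun i _ => hA i) (fun i _ => hB i) hv

/-! ### The criterion -/

/-- The irreducibility criterion, for operators in any basis of the form `O(k₀,k₁,k₂,k₃)`. -/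
theorem OB.simple_iff (h : OB q k0 k1 k2 k3 m T0 T1 T2 T3 a b) (hq : q ≠ 0) (hk0 : k0 ≠ 0)
    (hk1 : k1 ≠ 0) (hk2 : k2 ≠ 0) (hk3 : k3 ≠ 0)
    (hpar : k0 * k1 * k2 * k3 * (q * (q ^ 2) ^ m) = 1) :
    Simple T0 T1 T2 T3 ↔
      Good q m 1 ∧ Good q m k0 ∧ Good q m k1 ∧ Good q m k2 ∧ Good q m k3 := by
  constructor
  · intro hs
    obtain ⟨g1, g0, g2⟩ := h.good_of_simple hq hs
    obtain ⟨a', b', h'⟩ := h.rot hq hk0 hk1 hk2 hk3 hpar g1 g0 g2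
    obtain ⟨-, g3, g1'⟩ := h'.good_of_simple hq (fun W hW => hs W hW.rot.rot.rot)
    exact ⟨g1, g0, g1', g2, g3⟩
  · rintro ⟨g1, g0, g1', g2, g3⟩ W hW
    by_cases hne : W = ⊥
    · exact Or.inl hne
    right
    -- Three rotations produce a basis `a₃`, `b₃` adapted to `T₁, T₂, T₃, T₀`.
    obtain ⟨a₁, b₁, h₁⟩ := h.rot hq hk0 hk1 hk2 hk3 hpar g1 g0 g2
    obtain ⟨a₂, b₂, h₂⟩ := h₁.rot hq hk3 hk0 hk1 hk2 (by linear_combination hpar) g1 g3 g1'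
    obtain ⟨a₃, b₃, h₃⟩ := h₂.rot hq hk2 hk3 hk0 hk1 (by linear_combination hpar) g1 g2 g0
    obtain ⟨f, g, c⟩ := h.exists_coord
    obtain ⟨f₃, g₃, c₃⟩ := h₃.exists_coord
    obtain ⟨R, R2, R3, RW, Rspan, R0⟩ :=
      h.exists_rank_one hq hk2 hk3 (h.hrel hq hk0 hk1 hk2 hk3 hpar)
    have T2m : T2 (a m) = k2 • a m := by
      rw [h.T2a, h.b_zero m le_rfl, mul_inv_cancel₀ (pow_ne_zero _ (pow_ne_zero _ hq)), mul_one,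
        sub_zero]
    have Rv : ∀ v, R v = f m (R v) • a m := by
      intro v
      obtain ⟨x, hx⟩ := Submodule.mem_span_singleton.1 (Rspan v)
      rw [← hx]
      simp [c.fa]
    -- `v ↦ f m (R v)` is an eigenvector for the transposes of `T₂` and `T₃`.
    have ψ : ∀ w, f m (R w) = f m (R (a₃ m)) * f₃ m w := by
      refine h₃.functional_eq c₃ hq hk2 hk3 g1 (f m ∘ₗ R) (fun v => ?_) (fun v => ?_)
      · rw [LinearMap.comp_apply, R2, Rv, map_smul, T2m]
        simp [c.fa, mul_comm]
      · rw [LinearMap.comp_apply, R3, Rv, map_smul, h.T3a]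
        simp [c.fa, mul_comm]
    have hne0 : f m (R (a₃ m)) ≠ 0 := by
      intro h0
      apply R0
      rw [Rv, ψ, h0, zero_mul, zero_smul]
    obtain ⟨w, hw, hfw⟩ := h₃.exists_last c₃ hq hk1 hk2 hW.rot.rot.rot hne
    refine h.last_generates hq hk0 hk3 g1 g0 g2 hW ?_
    have e := RW W hW w hw
    rw [Rv, ψ] at e
    exact (W.smul_mem_iff (mul_ne_zero hne0 hfw)).1 e

end Module

end Helpers

/-! ### Translation to and from the formulas indexed by `0, …, d` -/

theorem e_of_lt {d i : ℕ} (h : d < i) : e F d i = 0 := by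
  simp [e, show ¬ i < d + 1 by omega]

/-- The formulas defining `O(k₀,k₁,k₂,k₃)`, regrouped by the parity of the index. -/
theorem IsO.ob {q k0 k1 k2 k3 : F} {m : ℕ} {T : ZMod 4 → Module.End F (Fin (2 * m + 1) → F)}
    (hq : q ≠ 0) (h : IsO q k0 k1 k2 k3 (2 * m) T) :
    OB q k0 k1 k2 k3 m (T 0) (T 1) (T 2) (T 3)
      (fun n => e F (2 * m) (2 * n)) (fun n => e F (2 * m) (2 * n + 1)) := by
  have hp : ∀ n, (q ^ 2) ^ n ≠ 0 := fun n => pow_ne_zero _ (pow_ne_zero _ hq)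
  obtain ⟨T0e, T0o, T00, T1e, T1o, T10, T1d, T2e, T2o, T2d, T3e, T3o⟩ := h
  have hsub : ∀ n, n ≤ m → (q ^ 2) ^ m * ((q ^ 2) ^ n)⁻¹ = (q ^ 2) ^ (m - n) := by
    intro n hn
    rw [← Nat.sub_add_cancel hn, pow_add, mul_inv_cancel_right₀ (hp n), Nat.add_sub_cancel]
  have hsub' : ∀ n, n ≤ m → (q ^ 2) ^ n * ((q ^ 2) ^ m)⁻¹ = ((q ^ 2) ^ (m - n))⁻¹ := by
    intro n hn
    rw [← hsub n hn, mul_inv, inv_inv, mul_comm]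
  have he : ∀ n, m < n → e F (2 * m) (2 * n) = 0 := fun n hn => e_of_lt (by omega)
  have ho : ∀ n, m ≤ n → e F (2 * m) (2 * n + 1) = 0 := fun n hn => e_of_lt (by omega)
  refine ⟨⟨?_, ?_, ?_, ?_, ?_, ?_, ?_, ?_, ?_, ?_⟩, he, ho, ?_, ?_⟩
  · exact T00
  · intro n
    by_cases hn : n < m
    · rw [T0e (2 * (n + 1)) ⟨n + 1, by ring⟩ (by omega) (by omega), ← pow_mul]
      rfl
    · rw [he (n + 1) (by omega), ho n (by omega)]; simp
  · intro n
    by_cases hn : n < m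
    · rw [T0o (2 * n + 1) ⟨n, rfl⟩ (by omega), ← pow_mul]
      rfl
    · rw [he (n + 1) (by omega), ho n (by omega)]; simp
  · exact T10
  · intro n
    by_cases hn : n + 1 < m
    · rw [T1e (2 * (n + 1)) ⟨n + 1, by ring⟩ (by omega) (by omega), ← pow_mul]
      rfl
    · by_cases hn' : n + 1 = m
      · subst hn'
        rw [T1d, ho (n + 1) le_rfl, ← pow_mul, smul_zero, add_zero]
        rfl
      · rw [he (n + 1) (by omega), ho n (by omega), ho (n + 1) (by omega)]; simp
  · intro n
    by_cases hn : n < m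
    · exact T1o _ ⟨n, rfl⟩ (by omega)
    · rw [ho n (by omega)]; simp
  · intro n
    rcases lt_trichotomy n m with hn | rfl | hn
    · rw [T2e (2 * n) ⟨n, by ring⟩ (by omega), hsub n hn.le, ← pow_mul,
        show 2 * m - 2 * n = 2 * (m - n) by omega]
    · rw [T2d, ho n le_rfl, hsub n le_rfl]; simp
    · rw [he n hn, ho n hn.le]; simp
  · intro n
    by_cases hn : n < m
    · rw [T2o (2 * n + 1) ⟨n, rfl⟩ (by omega), hsub n hn.le, hsub' n hn.le, ← pow_mul,
        show 2 * m + 1 - (2 * n + 1) = 2 * (m - n) by omega,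
        show 2 * m - (2 * n + 1) + 1 = 2 * (m - n) by omega]
      rfl
    · rw [ho n (by omega)]
      rcases (show m ≤ n by omega).eq_or_lt with rfl | hn
      · rw [hsub m le_rfl]; simp
      · rw [he n hn]; simp
  · intro n
    by_cases hn : n ≤ m
    · exact T3e _ ⟨n, by ring⟩ (by omega)
    · rw [he n (by omega)]; simp
  · intro n
    by_cases hn : n < m
    · rw [T3o (2 * n + 1) ⟨n, rfl⟩ (by omega), hsub' n hn.le, ← pow_mul,
        show 2 * m + 1 - (2 * n + 1) = 2 * (m - n) by omega]
      rfl
    · rw [ho n (by omega), he (n + 1) (by omega)]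
      rcases (show m ≤ n by omega).eq_or_lt with rfl | hn
      · rw [hsub' m le_rfl]; simp
      · rw [he n hn]; simp
  · intro W hA hB
    rw [eq_top_iff, ← (Pi.basisFun F (Fin (2 * m + 1))).span_eq, Submodule.span_le]
    rintro _ ⟨⟨i, hi⟩, rfl⟩
    have : e F (2 * m) i ∈ W := by
      rcases Nat.even_or_odd' i with ⟨n, rfl | rfl⟩
      · exact hA n
      · exact hB n
    simpa [e, hi] using this
  · simp

theorem good_iff {q : F} (hq : q ≠ 0) {m : ℕ} {k : F} :
    Good q m k ↔ ∀ i : ℕ, Even i → 2 ≤ i → i ≤ m + m → k ^ 2 ≠ (q ^ i)⁻¹ := by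
  have hp : ∀ n, q ^ n ≠ 0 := fun n => pow_ne_zero _ hq
  constructor
  · rintro h _ ⟨n, rfl⟩ h2 hm e
    refine h n (by omega) (by omega) ?_
    rw [e, ← pow_mul, two_mul, inv_mul_cancel₀ (hp _)]
  · intro h n h1 hn e
    refine h (n + n) ⟨n, rfl⟩ (by omega) (by omega) (eq_inv_of_mul_eq_one_left ?_)
    rwa [← pow_mul, two_mul] at e

/-- irreducibility criterion for `O(k₀,k₁,k₂,k₃)`. -/
theorem statement17 (q : F) (hq : q ≠ 0) (d : ℕ) (hd : Even d)
    (k0 k1 k2 k3 : F) (hk0 : k0 ≠ 0) (hk1 : k1 ≠ 0) (hk2 : k2 ≠ 0) (hk3 : k3 ≠ 0)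
    (hpar : k0 * k1 * k2 * k3 = (q ^ (d + 1))⁻¹)
    (T : ZMod 4 → Module.End F (Fin (d + 1) → F)) (hT : IsO q k0 k1 k2 k3 d T) :
    Irred T ↔
      ((∀ i : ℕ, Even i → 2 ≤ i → i ≤ d → q ^ i ≠ 1) ∧
       (∀ i : ℕ, Even i → 2 ≤ i → i ≤ d →
         k0 ^ 2 ≠ (q ^ i)⁻¹ ∧ k1 ^ 2 ≠ (q ^ i)⁻¹ ∧
         k2 ^ 2 ≠ (q ^ i)⁻¹ ∧ k3 ^ 2 ≠ (q ^ i)⁻¹)) := by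
  obtain ⟨m, rfl⟩ := hd
  have e2 : m + m = 2 * m := (two_mul m).symm
  have hpar' : k0 * k1 * k2 * k3 * (q * (q ^ 2) ^ m) = 1 := by
    rw [hpar, ← pow_mul, ← e2, ← pow_succ', inv_mul_cancel₀ (pow_ne_zero _ hq)]
  have hob : ∃ a b, OB q k0 k1 k2 k3 m (T 0) (T 1) (T 2) (T 3) a b := by
    clear hpar
    revert T
    rw [e2]
    exact fun T hT => ⟨_, _, hT.ob hq⟩
  obtain ⟨a, b, h⟩ := hob
  have hs : Irred T ↔ Simple (T 0) (T 1) (T 2) (T 3) := by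
    constructor
    · rintro ⟨-, h⟩ W ⟨h0, h1, h2, h3⟩
      refine h W fun i => ?_
      fin_cases i <;> assumption
    · exact fun h => ⟨⟨1, one_ne_zero⟩, fun W hW => h W ⟨hW 0, hW 1, hW 2, hW 3⟩⟩
  rw [hs, h.simple_iff hq hk0 hk1 hk2 hk3 hpar']
  simp only [good_iff hq, one_pow]
  have e1 : ∀ i, (1 : F) ≠ (q ^ i)⁻¹ ↔ q ^ i ≠ 1 := fun i => by
    rw [ne_comm, Ne, inv_eq_one]
  simp only [e1]
  exact and_congr_right fun _ => ⟨fun ⟨h0, h1, h2, h3⟩ i hi hi2 hid =>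
    ⟨h0 i hi hi2 hid, h1 i hi hi2 hid, h2 i hi hi2 hid, h3 i hi hi2 hid⟩,
    fun h => ⟨fun i hi hi2 hid => (h i hi hi2 hid).1, fun i hi hi2 hid => (h i hi hi2 hid).2.1,
      fun i hi hi2 hid => (h i hi hi2 hid).2.2.1, fun i hi hi2 hid => (h i hi hi2 hid).2.2.2⟩⟩

end DAHA
end

section
/- Let d ≥ 0 be an even integer and let k0,k1,k2,k3 be nonzero elements of F with k0 k1 k2 k3 = q^{-d-1}. Then the determinants of the operators T0, T1, T2, T3 of the representation O(k0,k1,k2,k3) are k0, k1, k2, k3, respectively. -/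
/-!
`T₁` and `T₃` are triangular once the basis is reordered by parity: `T₁` scales each odd `v_i` by
`k₁⁻¹`, while an even `v_i` goes to `k₁ v_i` plus multiples of its odd neighbours; `T₃` is the
same with the parities exchanged. Their determinants are therefore the alternating products
`k · k⁻¹ · k ⋯ k` of odd length `d + 1` (`det_of_parity`).

`T₀` and `T₂` are block diagonal, with one `1 × 1` block and `2 × 2` blocks on pairs
`(v_i, v_{i+1})` (`i` odd for `T₀`, even for `T₂`) of the form
`v_i ↦ a (v_i - v_{i+1})`, `v_{i+1} ↦ b v_i + c v_{i+1}`. Composing with the unipotent shear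
`v_i ↦ v_i + v_{i+1}` makes the operator upper triangular with diagonal entries `a`, `b + c`
(`det_of_pairs`), and for the given parameters `a (b + c) = 1`. Only the `1 × 1` block, which is
`v_0` for `T₀` and `v_d` for `T₂`, contributes to the determinant.
-/

universe u

namespace DAHA

variable {F : Type*} [Field F]

theorem e_apply (d i : ℕ) (j : Fin (d + 1)) : e F d i j = if (j : ℕ) = i then 1 else 0 := by
  unfold e
  split_ifs with h1 h2 h2
  · have : j = ⟨i, h1⟩ := Fin.ext h2
    simp [this]
  · have : j ≠ ⟨i, h1⟩ := fun h => h2 (by simp [h])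
    simp [this]
  · omega
  · rfl

theorem e_fin (d : ℕ) (i : Fin (d + 1)) : e F d i = Pi.single i (1 : F) := by
  rw [e, dif_pos i.isLt]

/-- An operator that is triangular with respect to some linear ordering of the basis (given by
an injective rank function `b`) has determinant the product of its diagonal entries. -/
theorem det_of_rank {d : ℕ} (T : Module.End F (Fin (d + 1) → F)) (b : Fin (d + 1) → ℤ)
    (hb : Function.Injective b) (h : ∀ i j, b j < b i → T (e F d j) i = 0) :
    LinearMap.det T = ∏ i : Fin (d + 1), T (e F d i) i := by
  classical
  have hM : ∀ i j, LinearMap.toMatrix' T i j = T (e F d j) i := by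
    intro i j
    rw [LinearMap.toMatrix'_apply, e_fin]
  have ht : (LinearMap.toMatrix' T).BlockTriangular b := by
    intro i j hij
    rw [hM]
    exact h i j hij
  rw [← LinearMap.det_toMatrix', ht.det, Finset.prod_image hb.injOn]
  refine Finset.prod_congr rfl fun i _ => ?_
  -- Injectivity of `b` makes every diagonal block a `1 × 1` matrix.
  have : Subsingleton {a // b a = b i} := ⟨fun x y => Subtype.ext (hb (x.2.trans y.2.symm))⟩
  rw [Matrix.det_eq_elem_of_subsingleton _ (⟨i, rfl⟩ : {a // b a = b i})]
  exact hM i i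

/-- An operator scaling the basis vectors of one parity class `p`, and sending every other `v_i`
to a combination of `v_{i-1}, v_i, v_{i+1}`, is triangular when the vectors in `p` are listed
first. -/
theorem det_of_parity {d : ℕ} (T : Module.End F (Fin (d + 1) → F)) (p : ℕ → Prop)
    (hp : ∀ i, p (i + 1) ↔ ¬ p i) (α β c : ℕ → F)
    (h1 : ∀ i ≤ d, p i → T (e F d i) = c i • e F d i)
    (h2 : ∀ i ≤ d, ¬ p i →
      T (e F d i) = α i • e F d (i - 1) + c i • e F d i + β i • e F d (i + 1))
    -- The truncated subtraction gives `v_{0-1} = v_0`, so the coefficient there has to vanish.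
    (h0 : ¬ p 0 → α 0 = 0) :
    LinearMap.det T = ∏ i ∈ Finset.range (d + 1), c i := by
  classical
  rw [det_of_rank T (fun i => if p i then (i : ℤ) else i + (d + 1)), ← Fin.prod_univ_eq_prod_range]
  · refine Finset.prod_congr rfl fun i _ => ?_
    by_cases hi : p i
    · rw [h1 i (by omega) hi]
      simp [e_apply]
    · rw [h2 i (by omega) hi]
      rcases Nat.eq_zero_or_pos (i : ℕ) with h | h
      · rw [h] at hi
        simp [e_apply, h, h0 hi]
      · simp [e_apply, show ¬ (i : ℕ) = i - 1 by omega]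
  · intro i j hij
    apply Fin.ext
    beta_reduce at hij
    split_ifs at hij <;> omega
  · intro i j hij
    by_cases hj : p j
    · have hne : ¬ (i : ℕ) = j := by
        intro h
        rw [h] at hij
        exact lt_irrefl _ hij
      rw [h1 j (by omega) hj]
      simp [e_apply, hne]
    · rw [if_neg hj] at hij
      have hi : ¬ p i := by
        intro h
        rw [if_pos h] at hij
        omega
      rw [if_neg hi] at hij
      -- `i` and `j` are distinct and both outside `p`, so `i` is not a neighbour of `j`.
      have n1 : ¬ (i : ℕ) = j := by omega
      have n2 : ¬ (i : ℕ) = j + 1 := fun h => hi (by rw [h, hp]; exact hj)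
      have n3 : ¬ (i : ℕ) = j - 1 := by omega
      rw [h2 j (by omega) hj]
      simp [e_apply, n1, n2, n3]

/-- The shear `v_i ↦ v_i + v_{i+1}` for `i` satisfying `p`, fixing the other basis vectors; here
`v_{d+1} = 0`. -/
noncomputable def shear (F : Type*) [Field F] (d : ℕ) (p : ℕ → Prop) [DecidablePred p] :
    Module.End F (Fin (d + 1) → F) :=
  Matrix.toLin' (Matrix.of fun j i : Fin (d + 1) =>
    e F d i j + if p i then e F d (i + 1) j else 0)

theorem shear_e (d : ℕ) (p : ℕ → Prop) [DecidablePred p] (i : ℕ) (hi : i ≤ d) :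
    shear F d p (e F d i) = e F d i + if p i then e F d (i + 1) else 0 := by
  obtain ⟨i, rfl⟩ : ∃ k : Fin (d + 1), (k : ℕ) = i := ⟨⟨i, by omega⟩, rfl⟩
  conv_lhs => rw [e_fin]
  ext j
  rw [shear, Matrix.toLin'_apply, Matrix.mulVec_single_one]
  by_cases h : p i <;> simp [h]

theorem det_shear (d : ℕ) (p : ℕ → Prop) [DecidablePred p] :
    LinearMap.det (shear F d p) = 1 := by
  rw [det_of_rank _ (fun i => -(i : ℤ))]
  · refine Finset.prod_eq_one fun i _ => ?_
    rw [shear_e d p i (by omega)]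
    by_cases h : p i <;> simp [h, e_apply]
  · intro i j hij
    apply Fin.ext
    beta_reduce at hij
    omega
  · intro i j hij
    rw [shear_e d p j (by omega)]
    have n1 : ¬ (i : ℕ) = j := by omega
    have n2 : ¬ (i : ℕ) = j + 1 := by omega
    by_cases h : p j <;> simp [h, e_apply, n1, n2]

/-- The determinant of an operator preserving the span of each pair `(v_i, v_{i+1})` with `p i`,
where `v_i ↦ a_i (v_i - v_{i+1})`. -/
theorem det_of_pairs {d : ℕ} (T : Module.End F (Fin (d + 1) → F)) (p : ℕ → Prop)
    [DecidablePred p] (hp : ∀ i, p (i + 1) ↔ ¬ p i) (a b c : ℕ → F)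
    (h1 : ∀ i ≤ d, p i → T (e F d i) = a i • (e F d i - e F d (i + 1)))
    (h2 : ∀ i ≤ d, ¬ p i → T (e F d i) = b i • e F d (i - 1) + c i • e F d i) :
    LinearMap.det T = ∏ i ∈ Finset.range (d + 1), if p i then a i else b i + c i := by
  have hS1 : ∀ i ≤ d, p i → (shear F d p * T) (e F d i) = a i • e F d i := by
    intro i hi h
    rw [Module.End.mul_apply, h1 i hi h, map_smul, map_sub, shear_e d p i hi, if_pos h]
    have hn : shear F d p (e F d (i + 1)) = e F d (i + 1) := by
      rcases Nat.lt_or_ge i d with hid | hid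
      · rw [shear_e d p (i + 1) hid, if_neg (by rw [hp]; exact not_not.mpr h), add_zero]
      · have : e F d (i + 1) = 0 := by
          rw [e, dif_neg (by omega)]
        rw [this, map_zero]
    rw [hn, add_sub_cancel_right]
  have hS2 : ∀ i ≤ d, ¬ p i →
      (shear F d p * T) (e F d i) =
        (if i = 0 then 0 else b i) • e F d (i - 1) + (b i + c i) • e F d i := by
    intro i hi h
    rw [Module.End.mul_apply, h2 i hi h, map_add, map_smul, map_smul, shear_e d p i hi, if_neg h,
      shear_e d p (i - 1) (by omega)]
    rcases i with _ | i
    · rw [Nat.zero_sub, if_neg h, if_pos rfl, add_zero, zero_smul, zero_add, add_smul]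
    · have hpi : p i := by
        by_contra h'
        exact h ((hp i).2 h')
      rw [Nat.add_sub_cancel, if_pos hpi, if_neg (Nat.succ_ne_zero i)]
      module
  have hdet : LinearMap.det T = LinearMap.det (shear F d p * T) := by
    rw [map_mul, det_shear, one_mul]
  rw [hdet, det_of_rank _ (fun i => (i : ℤ)), ← Fin.prod_univ_eq_prod_range]
  · refine Finset.prod_congr rfl fun i _ => ?_
    by_cases h : p i
    · rw [hS1 i (by omega) h]
      simp [h, e_apply]
    · rw [hS2 i (by omega) h]
      rcases Nat.eq_zero_or_pos (i : ℕ) with h0 | h0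
      · rw [h0] at h
        simp [h, e_apply, h0]
      · have n1 : ¬ (i : ℕ) = i - 1 := by omega
        simp [h, e_apply, h0.ne', n1]
  · intro i j hij
    apply Fin.ext
    beta_reduce at hij
    omega
  · intro i j hij
    have n1 : ¬ (i : ℕ) = j := by omega
    have n2 : ¬ (i : ℕ) = j - 1 := by omega
    by_cases h : p j
    · rw [hS1 j (by omega) h]
      simp [e_apply, n1]
    · rw [hS2 j (by omega) h, Pi.add_apply, Pi.smul_apply, Pi.smul_apply, e_apply, e_apply,
        if_neg n1, if_neg n2, smul_zero, smul_zero, add_zero]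

theorem prod_pairs_left (f : ℕ → F) (n : ℕ) (h : ∀ j < n, f (2 * j) * f (2 * j + 1) = 1) :
    ∏ i ∈ Finset.range (2 * n + 1), f i = f (2 * n) := by
  rw [Finset.prod_range_succ]
  suffices ∏ i ∈ Finset.range (2 * n), f i = 1 by rw [this, one_mul]
  induction n with
  | zero => simp
  | succ n ih =>
    rw [show 2 * (n + 1) = 2 * n + 1 + 1 by ring, Finset.prod_range_succ, Finset.prod_range_succ,
      ih fun j hj => h j (by omega), one_mul, h n (by omega)]

theorem prod_pairs_right (f : ℕ → F) (n : ℕ) (h : ∀ j < n, f (2 * j + 1) * f (2 * j + 2) = 1) :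
    ∏ i ∈ Finset.range (2 * n + 1), f i = f 0 := by
  induction n with
  | zero => simp
  | succ n ih =>
    rw [show 2 * (n + 1) + 1 = 2 * n + 1 + 1 + 1 by ring, Finset.prod_range_succ,
      Finset.prod_range_succ, ih fun j hj => h j (by omega), mul_assoc, h n (by omega), mul_one]

/-- the determinants of `T₀,T₁,T₂,T₃` on `O(k₀,k₁,k₂,k₃)` are
`k₀, k₁, k₂, k₃` respectively. -/
theorem statement19 (q : F) (hq : q ≠ 0) (d : ℕ) (hd : Even d)
    (k0 k1 k2 k3 : F) (hk0 : k0 ≠ 0) (hk1 : k1 ≠ 0) (hk2 : k2 ≠ 0) (hk3 : k3 ≠ 0)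
    (hpar : k0 * k1 * k2 * k3 = (q ^ (d + 1))⁻¹)
    (T : ZMod 4 → Module.End F (Fin (d + 1) → F)) (hT : IsO q k0 k1 k2 k3 d T) :
    LinearMap.det (T 0) = k0 ∧ LinearMap.det (T 1) = k1 ∧
    LinearMap.det (T 2) = k2 ∧ LinearMap.det (T 3) = k3 := by
  obtain ⟨hA1, hA2, hA3, hB1, hB2, hB3, hB4, hC1, hC2, hC3, hD1, hD2⟩ := hT
  obtain ⟨n, rfl⟩ : ∃ n, d = 2 * n := hd.exists_two_nsmul d |>.imp fun n h => by simpa using h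
  have hodd : ∀ i : ℕ, Odd (i + 1) ↔ ¬ Odd i := fun i => Nat.odd_add_one
  have heven : ∀ i : ℕ, Even (i + 1) ↔ ¬ Even i := fun i => Nat.even_add_one
  have o1 : ∀ j : ℕ, Odd (2 * j + 1) := fun j => ⟨j, rfl⟩
  have o2 : ∀ j : ℕ, ¬ Odd (2 * j) := fun j => by simp
  have e1 : ∀ j : ℕ, ¬ Even (2 * j + 1) := fun j => by simp
  have e2 : ∀ j : ℕ, Even (2 * j) := fun j => by simp
  refine ⟨?_, ?_, ?_, ?_⟩
  · rw [det_of_pairs (T 0) Odd hodd (fun i => k0⁻¹ * (q ^ (i + 1))⁻¹)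
      (fun i => k0⁻¹ * (q ^ i)⁻¹ * (1 - q ^ i) * (1 - k0 ^ 2 * q ^ i))
      (fun i => k0 + k0⁻¹ - k0⁻¹ * (q ^ i)⁻¹), prod_pairs_right]
    · simp
    · intro j _
      have hne : ¬ Odd (2 * j + 2) := by simpa [mul_add] using o2 (j + 1)
      rw [if_pos (o1 j), if_neg hne]
      have : q ^ (2 * j + 2) ≠ 0 := pow_ne_zero _ hq
      rw [show 2 * j + 1 + 1 = 2 * j + 2 from rfl]
      field_simp
      ring
    · intro i hi h
      have : i ≠ 2 * n := fun h' => o2 n (h' ▸ h)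
      exact hA2 i h (by omega)
    · intro i hi h
      rw [Nat.not_odd_iff_even] at h
      rcases Nat.eq_zero_or_pos i with rfl | h0
      · rw [hA3]
        simp
      · have : i ≠ 1 := by rintro rfl; exact e1 0 h
        exact hA1 i h (by omega) hi
  · rw [det_of_parity (T 1) Odd hodd (fun i => -(k1 * (1 - q ^ i) * (1 - k0 ^ 2 * q ^ i)))
      (fun _ => k1⁻¹) (fun i => if Odd i then k1⁻¹ else k1), prod_pairs_left]
    · rw [if_neg (o2 n)]
    · intro j _
      rw [if_neg (o2 j), if_pos (o1 j), mul_inv_cancel₀ hk1]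
    · intro i hi h
      have : i ≠ 2 * n := fun h' => o2 n (h' ▸ h)
      rw [if_pos h]
      exact hB2 i h (by omega)
    · intro i hi h
      rw [if_neg h]
      rw [Nat.not_odd_iff_even] at h
      rcases Nat.eq_zero_or_pos i with rfl | h0
      · rw [hB3]
        simp
      · rcases hi.eq_or_lt with rfl | hlt
        · have hz : e F (2 * n) (2 * n + 1) = 0 := by
            rw [e, dif_neg (by omega)]
          rw [hB4, hz, smul_zero, add_zero]
        · obtain ⟨m, rfl⟩ := h
          exact hB1 _ ⟨m, rfl⟩ (by omega) (by omega)
    · simp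
  · rw [det_of_pairs (T 2) Even heven (fun i => k2 * q ^ (2 * n - i))
      (fun i => -(k2 * (1 - (k2 ^ 2)⁻¹ * (q ^ (2 * n + 1 - i))⁻¹) * (1 - q ^ (2 * n - i + 1))))
      (fun i => k2 + k2⁻¹ - k2 * q ^ (2 * n - i + 1)), prod_pairs_left]
    · simp
    · intro j hj
      rw [if_pos (e2 j), if_neg (e1 j)]
      -- All exponents occurring in this block agree.
      rw [show 2 * n + 1 - (2 * j + 1) = 2 * n - 2 * j by omega,
        show 2 * n - (2 * j + 1) + 1 = 2 * n - 2 * j by omega]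
      have : q ^ (2 * n - 2 * j) ≠ 0 := pow_ne_zero _ hq
      generalize q ^ (2 * n - 2 * j) = Q at *
      field_simp
      ring
    · intro i hi h
      rcases hi.eq_or_lt with rfl | hlt
      · have hz : e F (2 * n) (2 * n + 1) = 0 := by
          rw [e, dif_neg (by omega)]
        rw [hC3, hz]
        simp
      · obtain ⟨m, rfl⟩ := h
        exact hC1 _ ⟨m, rfl⟩ (by omega)
    · intro i hi h
      have : i ≠ 2 * n := fun h' => h (h' ▸ e2 n)
      exact hC2 i (Nat.not_even_iff_odd.1 h) (by omega)
  · rw [det_of_parity (T 3) Even heven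
      (fun i => -(k3⁻¹ * (1 - (k2 ^ 2)⁻¹ * (q ^ (2 * n + 1 - i))⁻¹)
        * (1 - (q ^ (2 * n + 1 - i))⁻¹)))
      (fun _ => k3) (fun i => if Even i then k3 else k3⁻¹), prod_pairs_left]
    · rw [if_pos (e2 n)]
    · intro j _
      rw [if_pos (e2 j), if_neg (e1 j), mul_inv_cancel₀ hk3]
    · intro i hi h
      rw [if_pos h]
      exact hD1 i h hi
    · intro i hi h
      have : i ≠ 2 * n := fun h' => h (h' ▸ e2 n)
      rw [if_neg h]
      exact hD2 i (Nat.not_even_iff_odd.1 h) (by omega)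
    · intro h
      exact absurd (e2 0) h

end DAHA
end
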